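/- arXiv:2306.12222 — 2 statements merged into one kernel-verified Lean document; each statement's English description precedes it below -/
import Mathlib

section
/- Let r ∈ {4,5}, let n ≥ r−1 and k ≥ C(r,2) be integers, and let (G_1, …, G_k) be a rainbow K_r-free family of simple graphs on the vertex set [n]. Then the total number of edges satisfies Σ_{i=1}^{k} |E(G_i)| ≤ max{ (C(r,2)−1)·C(n,2), k·t_{r−1}(n) }. -/
open Finset SimpleGraph

/-- `t_t(n)`: the number of edges of the Turán graph `T_t(n)`, the complete `t`-partite
graph on `n` vertices with part sizes as equal as possible. -/
def turanE (t n : ℕ) : ℕ := (SimpleGraph.turanGraph n t).edgeFinset.card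

/-- A family `G_1, …, G_k` of simple graphs on `[n]` is rainbow `K_r`-free: there is no
`r`-set `S` together with an assignment `c` of pairwise distinct indices to the pairs
inside `S` such that each pair is an edge of the graph with the assigned index. -/
def RainbowCliqueFree (n k r : ℕ) (G : Fin k → SimpleGraph (Fin n)) : Prop :=
  ¬ ∃ (S : Finset (Fin n)) (c : Sym2 (Fin n) → Fin k),
      S.card = r ∧
      Set.InjOn c {e : Sym2 (Fin n) | ¬ e.IsDiag ∧ ∀ v ∈ e, v ∈ S} ∧
      ∀ u ∈ S, ∀ v ∈ S, u ≠ v → (G (c s(u, v))).Adj u v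


def DD {V : Type*} (w : V → V → ℕ) (A : Finset V) : ℕ := ∑ u ∈ A, ∑ v ∈ A, w u v

def low {V : Type*} [DecidableEq V] (w : V → V → ℕ) (t : ℕ) (u v : V) : ℕ :=
  if u ≠ v ∧ w u v ≤ t then 1 else 0

section DDlemmas
set_option linter.unusedSectionVars false
variable {V : Type*} [DecidableEq V]

lemma low_symm {w : V → V → ℕ} (hs : ∀ u v, w u v = w v u) (t : ℕ) (u v : V) :
    low w t u v = low w t v u := by
  simp only [low, hs u v, ne_comm]

lemma low_self (w : V → V → ℕ) (t : ℕ) (u : V) : low w t u u = 0 := by simp [low]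

lemma DD_union {w : V → V → ℕ} (hs : ∀ u v, w u v = w v u) {A B : Finset V}
    (h : Disjoint A B) :
    DD w (A ∪ B) = DD w A + DD w B + 2 * ∑ v ∈ B, ∑ u ∈ A, w u v := by
  have h1 : ∑ u ∈ A, ∑ v ∈ B, w u v = ∑ v ∈ B, ∑ u ∈ A, w u v := Finset.sum_comm
  have h2 : ∑ u ∈ B, ∑ v ∈ A, w u v = ∑ v ∈ B, ∑ u ∈ A, w u v :=
    Finset.sum_congr rfl fun u _ => Finset.sum_congr rfl fun v _ => hs u v
  simp only [DD, Finset.sum_union h, Finset.sum_add_distrib, h1, h2]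
  ring

lemma DD_insert {w : V → V → ℕ} (hs : ∀ u v, w u v = w v u) (h0 : ∀ u, w u u = 0)
    {A : Finset V} {x : V} (h : x ∉ A) :
    DD w (insert x A) = DD w A + 2 * ∑ u ∈ A, w u x := by
  rw [← Finset.union_singleton, DD_union hs (by simpa using h)]
  simp [DD, h0]

lemma sum_ne (A : Finset V) (k : ℕ) :
    ∑ u ∈ A, ∑ v ∈ A, (if u ≠ v then k else 0) = k * (#A * (#A - 1)) := by
  have : ∀ u ∈ A, ∑ v ∈ A, (if u ≠ v then k else 0) = (#A - 1) * k := by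
    intro u hu
    rw [← Finset.sum_filter, Finset.sum_const, Finset.filter_ne, Finset.card_erase_of_mem hu,
      smul_eq_mul]
  rw [Finset.sum_congr rfl this, Finset.sum_const, smul_eq_mul]; ring

lemma DD_low {w : V → V → ℕ} (h0 : ∀ u, w u u = 0) {k : ℕ} (hk : ∀ u v, w u v ≤ k)
    (A : Finset V) {t : ℕ} (ht : t ≤ k) :
    DD w A + DD (low w t) A * (k - t) ≤ k * (#A * (#A - 1)) := by
  rw [← sum_ne A k]
  simp only [DD, Finset.sum_mul, ← Finset.sum_add_distrib]
  refine Finset.sum_le_sum fun u _ => Finset.sum_le_sum fun v _ => ?_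
  have := hk u v
  by_cases huv : u = v
  · subst huv; simp [h0, low]
  · simp only [low, huv, ne_eq, not_false_eq_true, true_and, if_true]
    split_ifs <;> omega

lemma DD_le {w : V → V → ℕ} (h0 : ∀ u, w u u = 0) {k : ℕ} (hk : ∀ u v, w u v ≤ k)
    (A : Finset V) : DD w A ≤ k * (#A * (#A - 1)) := by
  have := DD_low h0 hk A (le_refl k)
  simpa using this

lemma sum_low {w : V → V → ℕ} {k : ℕ} (hk : ∀ u v, w u v ≤ k)
    (A : Finset V) {x : V} (hx : x ∉ A) {t : ℕ} (ht : t ≤ k) :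
    ∑ u ∈ A, w u x + (∑ u ∈ A, low w t u x) * (k - t) ≤ #A * k := by
  rw [Finset.sum_mul, ← Finset.sum_add_distrib, ← smul_eq_mul, ← Finset.sum_const]
  refine Finset.sum_le_sum fun u hu => ?_
  have := hk u x
  have huv : u ≠ x := by rintro rfl; exact hx hu
  simp only [low, huv, ne_eq, not_false_eq_true, true_and]
  split_ifs <;> omega

lemma DD_mono {w : V → V → ℕ} {A B : Finset V} (h : A ⊆ B) : DD w A ≤ DD w B := by
  unfold DD
  calc _ ≤ ∑ u ∈ A, ∑ v ∈ B, w u v :=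
        Finset.sum_le_sum fun u _ => Finset.sum_le_sum_of_subset h
    _ ≤ _ := Finset.sum_le_sum_of_subset h

lemma DD_low_zero {w : V → V → ℕ} {t : ℕ} {A : Finset V} (h : ∀ u ∈ A, ∀ v ∈ A, u ≠ v → t < w u v) :
    DD (low w t) A = 0 := by
  unfold DD
  refine Finset.sum_eq_zero fun u hu => Finset.sum_eq_zero fun v hv => ?_
  unfold low
  rw [if_neg]
  rintro ⟨h1, h2⟩
  have := h u hu v hv h1
  omega

/-- deleting one vertex, summed over all vertices -/
lemma DD_erase_sum {w : V → V → ℕ} (hs : ∀ u v, w u v = w v u) (h0 : ∀ u, w u u = 0)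
    (A : Finset V) : ∑ x ∈ A, DD w (A.erase x) + 2 * DD w A = #A * DD w A := by
  have : ∀ x ∈ A, DD w (A.erase x) + 2 * ∑ u ∈ A, w u x = DD w A := by
    intro x hx
    have h1 := DD_insert hs h0 (Finset.notMem_erase x A)
    rw [Finset.insert_erase hx] at h1
    have h2 := Finset.sum_erase_add A (fun u => w u x) hx
    simp only [h0, add_zero] at h2
    rw [h1, h2]
  have h3 := Finset.sum_congr rfl this
  rw [Finset.sum_add_distrib, Finset.sum_const, smul_eq_mul, ← Finset.mul_sum, Finset.sum_comm] at h3
  exact h3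

lemma averaging {w : V → V → ℕ} (hs : ∀ u v, w u v = w v u) (h0 : ∀ u, w u u = 0)
    {s c : ℕ} (hs2 : 2 ≤ s) {A : Finset V}
    (h : ∀ S ⊆ A, #S = s → DD w S ≤ c * (s * (s - 1))) :
    s ≤ #A → DD w A ≤ c * (#A * (#A - 1)) := by
  induction A using Finset.strongInduction with
  | H A ih =>
    intro hA
    rcases hA.eq_or_lt with hA | hA
    · have := h A (Finset.Subset.refl _) hA.symm
      rwa [← hA]
    · have h1 : ∀ x ∈ A, DD w (A.erase x) ≤ c * ((#A - 1) * (#A - 1 - 1)) := by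
        intro x hx
        have h2 := ih (A.erase x) (Finset.erase_ssubset hx)
          (fun S hS => h S (hS.trans (Finset.erase_subset _ _)))
        rw [Finset.card_erase_of_mem hx] at h2
        exact h2 (by omega)
      have h3 := Finset.sum_le_sum h1
      rw [Finset.sum_const, smul_eq_mul] at h3
      have h4 := DD_erase_sum hs h0 A
      obtain ⟨a, ha⟩ : ∃ a, #A = a + 3 := ⟨#A - 3, by omega⟩
      rw [ha] at h3 h4 ⊢
      simp only [show a + 3 - 1 = a + 2 by omega, show a + 2 - 1 = a + 1 by omega] at *
      have h5 : (a + 1) * DD w A ≤ (a + 1) * (c * ((a + 3) * (a + 2))) := by nlinarith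
      exact Nat.le_of_mul_le_mul_left h5 (by omega)


lemma DD_low_pos {w : V → V → ℕ} (hs : ∀ u v, w u v = w v u) {t : ℕ} {A : Finset V} {p q : V}
    (hp : p ∈ A) (hq : q ∈ A) (hpq : p ≠ q) (h : w p q ≤ t) : 2 ≤ DD (low w t) A := by
  have h1 : DD (low w t) {p, q} ≤ DD (low w t) A := DD_mono (by
    intro x; simp only [Finset.mem_insert, Finset.mem_singleton]; rintro (rfl | rfl) <;> assumption)
  refine le_trans ?_ h1
  rw [DD_insert (low_symm hs t) (low_self w t) (by simpa using hpq)]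
  have : low w t q p = 1 := by
    unfold low; rw [if_pos ⟨hpq.symm, by rw [hs]; exact h⟩]
  simp [this]

lemma sum_low_pos {w : V → V → ℕ} {t : ℕ} {A : Finset V} {p x : V}
    (hp : p ∈ A) (hx : x ∉ A) (h : w p x ≤ t) : 1 ≤ ∑ u ∈ A, low w t u x := by
  have h1 : low w t p x = 1 := by
    unfold low; rw [if_pos ⟨by rintro rfl; exact hx hp, h⟩]
  rw [← h1]
  exact Finset.single_le_sum (f := fun u => low w t u x) (fun _ _ => Nat.zero_le _) hp

/-- The parameters treated by the deletion argument: `s = r - 1`, `c = C(r,2) - 1`, `m = C(r,2)`. -/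
def Params (s k c m : ℕ) : Prop :=
  (s = 3 ∧ c = 5 ∧ m = 6 ∧ (k = 7 ∨ k = 8)) ∨ (s = 4 ∧ c = 9 ∧ m = 10 ∧ (k = 11 ∨ k = 12))

lemma good {s k c m : ℕ} (hP : Params s k c m) {w : V → V → ℕ} (hs : ∀ u v, w u v = w v u)
    (h0 : ∀ u, w u u = 0) (hk : ∀ u v, w u v ≤ k)
    (hNR : ∀ S : Finset V, #S = s + 1 → ∃ t < m, 2 * t + 2 ≤ DD (low w t) S)
    {T : Finset V} (hT : #T = s) (h2 : ∀ u ∈ T, ∀ v ∈ T, u ≠ v → 1 < w u v)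
    (hD : c * (s * (s - 1)) < DD w T) {x : V} (hx : x ∉ T) :
    ∑ u ∈ T, w u x ≤ (s - 1) * k := by
  by_contra hcon
  obtain ⟨t, ht, h3⟩ := hNR (insert x T) (by rw [Finset.card_insert_of_notMem hx, hT])
  rw [DD_insert (low_symm hs t) (low_self w t) hx] at h3
  have htk : t ≤ k := by rcases hP with ⟨_, _, _, _ | _⟩ | ⟨_, _, _, _ | _⟩ <;> omega
  have h4 := DD_low h0 hk T htk
  have h5 := sum_low hk T hx htk
  have h6 := DD_low_zero h2
  have h8 : ∑ u ∈ T, low w t u x ≤ #T := by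
    rw [Finset.card_eq_sum_ones]
    refine Finset.sum_le_sum fun u _ => ?_
    unfold low
    split_ifs <;> omega
  have h7 : DD (low w 0) T = 0 := DD_low_zero fun u hu v hv huv => by
    have := h2 u hu v hv huv
    omega
  rw [hT] at h4 h5 h8
  rcases hP with ⟨rfl, rfl, rfl, rfl | rfl⟩ | ⟨rfl, rfl, rfl, rfl | rfl⟩ <;>
    interval_cases t <;> norm_num at * <;> omega

lemma core {s k c m N : ℕ} (hP : Params s k c m) {w : V → V → ℕ} (hs : ∀ u v, w u v = w v u)
    (h0 : ∀ u, w u u = 0) (hk : ∀ u v, w u v ≤ k)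
    (hNR : ∀ S : Finset V, #S = s + 1 → ∃ t < m, 2 * t + 2 ≤ DD (low w t) S)
    {τ : ℕ → ℕ} (hτ1 : ∀ a < s, τ a = a * (a - 1))
    (hτ2 : ∀ a, τ (a + s) = s * (s - 1) + 2 * (s - 1) * a + τ a)
    (hτ3 : ∀ a, k * τ a + k * ((s - 1) * (s - 2)) + 2 * (((s - 2) * k + 1) * a)
      ≤ k * τ (a + (s - 1)))
    (hτ4 : ∀ a ≤ N, c * (a * (a - 1)) ≤ k * τ a) (A : Finset V) :
    #A ≤ N → DD w A ≤ k * τ #A := by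
  induction A using Finset.strongInduction with
  | H A ih =>
  intro hN
  have hs2 : 3 ≤ s := by rcases hP with h | h <;> omega
  by_cases hlt : #A < s
  · rw [hτ1 _ hlt]; exact DD_le h0 hk A
  push Not at hlt
  -- the general deletion step
  have step : ∀ (T : Finset V) (b : ℕ), T ⊆ A → 0 < #T → (∀ x ∈ A \ T, ∑ u ∈ T, w u x ≤ b) →
      DD w A ≤ k * (#T * (#T - 1)) + 2 * (b * (#A - #T)) + k * τ (#A - #T) := by
    intro T b hTA hT hb
    have h1 := DD_union hs (Finset.disjoint_sdiff (s := T) (t := A))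
    rw [Finset.union_sdiff_of_subset hTA] at h1
    have h2 := ih (A \ T) (Finset.sdiff_ssubset hTA (Finset.card_pos.mp hT))
      ((Finset.card_le_card Finset.sdiff_subset).trans hN)
    have h3 := Finset.sum_le_sum hb
    rw [Finset.sum_const, smul_eq_mul] at h3
    rw [Finset.card_sdiff_of_subset hTA] at h2 h3
    have h4 := DD_le h0 hk T
    rw [mul_comm b]
    omega
  by_cases hg : ∃ T ⊆ A, #T = s ∧ (∀ u ∈ T, ∀ v ∈ T, u ≠ v → 1 < w u v) ∧
      c * (s * (s - 1)) < DD w T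
  · obtain ⟨T, hTA, hT, h2, hD⟩ := hg
    have h1 := step T ((s - 1) * k) hTA (by omega) fun x hx =>
      good hP hs h0 hk hNR hT h2 hD (Finset.mem_sdiff.mp hx).2
    have h3 := hτ2 (#A - #T)
    rw [hT] at h1 h3
    rw [Nat.sub_add_cancel hlt] at h3
    rw [h3]
    refine h1.trans (le_of_eq ?_)
    ring
  by_cases hb : ∃ T ⊆ A, #T = s ∧ c * (s * (s - 1)) < DD w T
  · obtain ⟨T, hTA, hT, hD⟩ := hb
    obtain ⟨x, hx, y, hy, hxy, hw⟩ : ∃ x ∈ T, ∃ y ∈ T, x ≠ y ∧ w x y ≤ 1 := by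
      by_contra hcon
      push Not at hcon
      exact hg ⟨T, hTA, hT, hcon, hD⟩
    have hk1 : 1 ≤ k := by rcases hP with h | h <;> omega
    have hT' : #(T.erase y) = s - 1 := by rw [Finset.card_erase_of_mem hy, hT]
    have hyT : y ∉ T.erase y := Finset.notMem_erase y T
    have hxT : x ∈ T.erase y := Finset.mem_erase.mpr ⟨hxy, hx⟩
    have e1 := DD_insert hs h0 hyT
    have e2 := DD_insert (low_symm hs 1) (low_self w 1) hyT
    rw [Finset.insert_erase hy] at e1 e2
    have e3 := sum_low hk (T.erase y) hyT hk1
    have e4 := sum_low_pos hxT hyT hw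
    have e5 := DD_low h0 hk T hk1
    rw [hT] at e5
    rw [hT'] at e3
    have h2 : ∀ u ∈ T.erase y, ∀ v ∈ T.erase y, u ≠ v → 1 < w u v := by
      intro p hp q hq hpq
      by_contra hcon
      have e6 := DD_low_pos hs hp hq hpq (t := 1) (by omega)
      rcases hP with ⟨rfl, rfl, rfl, rfl | rfl⟩ | ⟨rfl, rfl, rfl, rfl | rfl⟩ <;>
        norm_num at * <;> omega
    have hTA' : T.erase y ⊆ A := (Finset.erase_subset _ _).trans hTA
    have h1 := step (T.erase y) ((s - 2) * k + 1) hTA' (by omega) (by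
      intro v hv
      by_contra hcon
      have hvT := (Finset.mem_sdiff.mp hv).2
      have hvA := (Finset.mem_sdiff.mp hv).1
      have f1 := sum_low hk (T.erase y) hvT hk1
      rw [hT'] at f1
      have f2 := DD_insert hs h0 hvT
      have f3 : ∀ u ∈ T.erase y, 1 < w u v := by
        intro u hu
        by_contra hcon2
        have f4 := sum_low_pos (w := w) (t := 1) hu hvT (by omega)
        rcases hP with ⟨rfl, rfl, rfl, rfl | rfl⟩ | ⟨rfl, rfl, rfl, rfl | rfl⟩ <;>
          norm_num at * <;> omega
      refine hg ⟨insert v (T.erase y), Finset.insert_subset hvA hTA', ?_, ?_, ?_⟩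
      · rw [Finset.card_insert_of_notMem hvT]; omega
      · intro p hp q hq hpq
        rcases Finset.mem_insert.mp hp with hp1 | hp1 <;>
          rcases Finset.mem_insert.mp hq with hq1 | hq1
        · exact absurd (hp1.trans hq1.symm) hpq
        · rw [hs, hp1]; exact f3 q hq1
        · rw [hq1]; exact f3 p hp1
        · exact h2 p hp1 q hq1 hpq
      · clear f3 hg h2 ih step hτ1 hτ2 hτ3 hτ4 hNR hk hs h0
        rcases hP with ⟨rfl, rfl, rfl, rfl | rfl⟩ | ⟨rfl, rfl, rfl, rfl | rfl⟩ <;>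
          norm_num at * <;> omega)
    have h3 := hτ3 (#A - (s - 1))
    rw [Nat.sub_add_cancel (by omega)] at h3
    rw [hT', show s - 1 - 1 = s - 2 by omega] at h1
    omega
  · push Not at hb
    exact (averaging hs h0 (by omega) hb hlt).trans (hτ4 _ hN)

end DDlemmas

/-! ### The Turán numbers -/

lemma turanE_add (s n : ℕ) : turanE s (n + s) = turanE s n + n * (s - 1) + s.choose 2 :=
  card_edgeFinset_turanGraph_add

lemma turanE_small (s a : ℕ) (h : a < s) : turanE s a = a.choose 2 := by
  unfold turanE
  rw [card_edgeFinset_turanGraph, Nat.mod_eq_of_lt h]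
  simp

lemma turanE_three (q m : ℕ) (h : m < 3) :
    2 * turanE 3 (3 * q + m) = 6 * q * q + 4 * q * m + m * (m - 1) := by
  induction q with
  | zero =>
    rw [turanE_small 3 _ (by omega)]
    interval_cases m <;> decide
  | succ q ih =>
    rw [show 3 * (q + 1) + m = 3 * q + m + 3 by ring, turanE_add]
    simp only [show Nat.choose 3 2 = 3 from rfl]
    norm_num
    linarith

lemma turanE_four (q m : ℕ) (h : m < 4) :
    2 * turanE 4 (4 * q + m) = 12 * q * q + 6 * q * m + m * (m - 1) := by
  induction q with
  | zero =>
    rw [turanE_small 4 _ (by omega)]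
    interval_cases m <;> decide
  | succ q ih =>
    rw [show 4 * (q + 1) + m = 4 * q + m + 4 by ring, turanE_add]
    simp only [show Nat.choose 4 2 = 6 from rfl]
    norm_num
    linarith

lemma exists_divmod (d : ℕ) (hd : 0 < d) (a : ℕ) : ∃ q m, m < d ∧ a = d * q + m :=
  ⟨a / d, a % d, Nat.mod_lt _ hd, (Nat.div_add_mod a d).symm⟩

lemma tau1 {s : ℕ} (a : ℕ) (h : a < s) : 2 * turanE s a = a * (a - 1) := by
  rw [turanE_small _ _ h, Nat.choose_two_right,
    Nat.mul_div_cancel' (Nat.even_mul_pred_self a).two_dvd]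

lemma tau2 (s a : ℕ) :
    2 * turanE s (a + s) = s * (s - 1) + 2 * (s - 1) * a + 2 * turanE s a := by
  have : 2 * s.choose 2 = s * (s - 1) := by
    rw [Nat.choose_two_right, Nat.mul_div_cancel' (Nat.even_mul_pred_self s).two_dvd]
  rw [turanE_add, ← this]
  ring

lemma tau3_three (k : ℕ) (hk : k = 7 ∨ k = 8) (a : ℕ) :
    k * (2 * turanE 3 a) + k * ((3 - 1) * (3 - 2)) + 2 * (((3 - 2) * k + 1) * a)
      ≤ k * (2 * turanE 3 (a + (3 - 1))) := by
  obtain ⟨q, m, hm, rfl⟩ := exists_divmod 3 (by omega) a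
  interval_cases m
  · have h1 := turanE_three q 0 (by omega)
    have h2 := turanE_three q 2 (by omega)
    norm_num at h1 h2 ⊢
    rw [h1, h2]
    rcases hk with rfl | rfl <;> nlinarith
  · have h1 := turanE_three q 1 (by omega)
    have h2 := turanE_three (q + 1) 0 (by omega)
    rw [show 3 * (q + 1) + 0 = 3 * q + 1 + 2 by ring] at h2
    norm_num at h1 h2 ⊢
    rw [h1, h2]
    rcases hk with rfl | rfl <;> nlinarith
  · have h1 := turanE_three q 2 (by omega)
    have h2 := turanE_three (q + 1) 1 (by omega)
    rw [show 3 * (q + 1) + 1 = 3 * q + 2 + 2 by ring] at h2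
    norm_num at h1 h2 ⊢
    rw [h1, h2]
    rcases hk with rfl | rfl <;> nlinarith

lemma tau3_four (k : ℕ) (hk : k = 11 ∨ k = 12) (a : ℕ) :
    k * (2 * turanE 4 a) + k * ((4 - 1) * (4 - 2)) + 2 * (((4 - 2) * k + 1) * a)
      ≤ k * (2 * turanE 4 (a + (4 - 1))) := by
  obtain ⟨q, m, hm, rfl⟩ := exists_divmod 4 (by omega) a
  interval_cases m
  · have h1 := turanE_four q 0 (by omega)
    have h2 := turanE_four q 3 (by omega)
    norm_num at h1 h2 ⊢
    rw [h1, h2]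
    rcases hk with rfl | rfl <;> nlinarith
  · have h1 := turanE_four q 1 (by omega)
    have h2 := turanE_four (q + 1) 0 (by omega)
    rw [show 4 * (q + 1) + 0 = 4 * q + 1 + 3 by ring] at h2
    norm_num at h1 h2 ⊢
    rw [h1, h2]
    rcases hk with rfl | rfl <;> nlinarith
  · have h1 := turanE_four q 2 (by omega)
    have h2 := turanE_four (q + 1) 1 (by omega)
    rw [show 4 * (q + 1) + 1 = 4 * q + 2 + 3 by ring] at h2
    norm_num at h1 h2 ⊢
    rw [h1, h2]
    rcases hk with rfl | rfl <;> nlinarith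
  · have h1 := turanE_four q 3 (by omega)
    have h2 := turanE_four (q + 1) 2 (by omega)
    rw [show 4 * (q + 1) + 2 = 4 * q + 3 + 3 by ring] at h2
    norm_num at h1 h2 ⊢
    rw [h1, h2]
    rcases hk with rfl | rfl <;> nlinarith

lemma tau4_seven (a : ℕ) (ha : a ≤ 15) : 5 * (a * (a - 1)) ≤ 7 * (2 * turanE 3 a) := by
  obtain ⟨q, m, hm, rfl⟩ := exists_divmod 3 (by omega) a
  rw [turanE_three q m hm]
  have : q ≤ 5 := by omega
  interval_cases q <;> interval_cases m <;> omega

lemma tau4_eleven (a : ℕ) (ha : a ≤ 12) : 9 * (a * (a - 1)) ≤ 11 * (2 * turanE 4 a) := by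
  obtain ⟨q, m, hm, rfl⟩ := exists_divmod 4 (by omega) a
  rw [turanE_four q m hm]
  have : q ≤ 3 := by omega
  interval_cases q <;> interval_cases m <;> omega

lemma tau4_eight (a : ℕ) : 5 * (a * (a - 1)) ≤ 8 * (2 * turanE 3 a) := by
  obtain ⟨q, m, hm, rfl⟩ := exists_divmod 3 (by omega) a
  rw [turanE_three q m hm]
  rcases Nat.eq_zero_or_pos (3 * q + m) with h | h
  · rw [h]; simp
  · obtain ⟨b, hb⟩ : ∃ b, 3 * q + m = b + 1 := ⟨3 * q + m - 1, by omega⟩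
    rw [hb, Nat.add_sub_cancel]
    interval_cases m <;> norm_num
    · nlinarith
    · have : b = 3 * q := by omega
      subst this; nlinarith
    · have : b = 3 * q + 1 := by omega
      subst this; nlinarith

lemma tau4_twelve (a : ℕ) : 9 * (a * (a - 1)) ≤ 12 * (2 * turanE 4 a) := by
  obtain ⟨q, m, hm, rfl⟩ := exists_divmod 4 (by omega) a
  rw [turanE_four q m hm]
  rcases Nat.eq_zero_or_pos (4 * q + m) with h | h
  · rw [h]; simp
  · obtain ⟨b, hb⟩ : ∃ b, 4 * q + m = b + 1 := ⟨4 * q + m - 1, by omega⟩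
    rw [hb, Nat.add_sub_cancel]
    interval_cases m <;> norm_num
    · nlinarith
    · have : b = 4 * q := by omega
      subst this; nlinarith
    · have : b = 4 * q + 1 := by omega
      subst this; nlinarith
    · have : b = 4 * q + 2 := by omega
      subst this; nlinarith

/-! ### Weight form of the theorem -/

section Weights
variable {V : Type*} [DecidableEq V]

/-- Sets of size `r` when the number of colours is `C(r,2)`. -/
lemma base {s k c m : ℕ} (hP : (s = 3 ∧ c = 5 ∧ m = 6 ∧ k = 6) ∨ (s = 4 ∧ c = 9 ∧ m = 10 ∧ k = 10))
    {w : V → V → ℕ} (h0 : ∀ u, w u u = 0) (hk : ∀ u v, w u v ≤ k)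
    (hNR : ∀ S : Finset V, #S = s + 1 → ∃ t < m, 2 * t + 2 ≤ DD (low w t) S)
    (S : Finset V) (hS : #S = s + 1) : DD w S ≤ c * ((s + 1) * (s + 1 - 1)) := by
  obtain ⟨t, ht, h⟩ := hNR S hS
  have htk : t ≤ k := by omega
  have h1 := DD_low h0 hk S htk
  rw [hS] at h1
  rcases hP with ⟨rfl, rfl, rfl, rfl⟩ | ⟨rfl, rfl, rfl, rfl⟩ <;>
    interval_cases t <;> norm_num at * <;> omega

lemma weights {s k c m : ℕ}
    (hP : (s = 3 ∧ c = 5 ∧ m = 6 ∧ (k = 6 ∨ k = 7 ∨ k = 8)) ∨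
      (s = 4 ∧ c = 9 ∧ m = 10 ∧ (k = 10 ∨ k = 11 ∨ k = 12)))
    {w : V → V → ℕ} (hs : ∀ u v, w u v = w v u)
    (h0 : ∀ u, w u u = 0) (hk : ∀ u v, w u v ≤ k)
    (hNR : ∀ S : Finset V, #S = s + 1 → ∃ t < m, 2 * t + 2 ≤ DD (low w t) S)
    (A : Finset V) (hA : s ≤ #A) :
    DD w A ≤ max (c * (#A * (#A - 1))) (k * (2 * turanE s #A)) := by
  rcases hP with ⟨rfl, rfl, rfl, rfl | rfl | rfl⟩ | ⟨rfl, rfl, rfl, rfl | rfl | rfl⟩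
  · rcases hA.eq_or_lt with hA | hA
    · refine le_max_of_le_right ?_
      rw [← hA]
      have h1 := DD_le h0 hk A
      have h2 := turanE_three 1 0 (by omega)
      norm_num at h2
      rw [← hA] at h1
      norm_num at h1
      omega
    · exact le_max_of_le_left (averaging hs h0 (by omega)
        (fun S _ hS => base (Or.inl ⟨rfl, rfl, rfl, rfl⟩) h0 hk hNR S hS) hA)
  · have key := core (N := 15) (Or.inl ⟨rfl, rfl, rfl, Or.inl rfl⟩) hs h0 hk hNR
      (τ := fun a => 2 * turanE 3 a) tau1 (tau2 3) (tau3_three 7 (by omega)) tau4_seven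
    rcases le_total #A 15 with h | h
    · exact le_max_of_le_right (key A h)
    · refine le_max_of_le_left (averaging (s := 15) hs h0 (by omega) (fun S _ hS => ?_) h)
      have h1 := key S hS.le
      have h2 := turanE_three 5 0 (by omega)
      simp only [hS] at h1
      norm_num at h2 ⊢
      omega
  · exact le_max_of_le_right (core (N := #A) (Or.inl ⟨rfl, rfl, rfl, Or.inr rfl⟩) hs h0 hk hNR
      (τ := fun a => 2 * turanE 3 a) tau1 (tau2 3) (tau3_three 8 (by omega))
      (fun a _ => tau4_eight a) A le_rfl)
  · rcases hA.eq_or_lt with hA | hA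
    · refine le_max_of_le_right ?_
      rw [← hA]
      have h1 := DD_le h0 hk A
      have h2 := turanE_four 1 0 (by omega)
      norm_num at h2
      rw [← hA] at h1
      norm_num at h1
      omega
    · exact le_max_of_le_left (averaging hs h0 (by omega)
        (fun S _ hS => base (Or.inr ⟨rfl, rfl, rfl, rfl⟩) h0 hk hNR S hS) hA)
  · have key := core (N := 12) (Or.inr ⟨rfl, rfl, rfl, Or.inl rfl⟩) hs h0 hk hNR
      (τ := fun a => 2 * turanE 4 a) tau1 (tau2 4) (tau3_four 11 (by omega)) tau4_eleven
    rcases le_total #A 12 with h | h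
    · exact le_max_of_le_right (key A h)
    · refine le_max_of_le_left (averaging (s := 12) hs h0 (by omega) (fun S _ hS => ?_) h)
      have h1 := key S hS.le
      have h2 := turanE_four 3 0 (by omega)
      simp only [hS] at h1
      norm_num at h2 ⊢
      omega
  · exact le_max_of_le_right (core (N := #A) (Or.inr ⟨rfl, rfl, rfl, Or.inr rfl⟩) hs h0 hk hNR
      (τ := fun a => 2 * turanE 4 a) tau1 (tau2 4) (tau3_four 12 (by omega))
      (fun a _ => tau4_twelve a) A le_rfl)

end Weights

/-! ### From graph families to weights -/

section Families
open Classical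

/-- number of graphs of the family containing the pair `uv` -/
noncomputable def wt {n k : ℕ} (G : Fin k → SimpleGraph (Fin n)) (u v : Fin n) : ℕ :=
  #{i | (G i).Adj u v}

lemma DD_wt {n k : ℕ} (G : Fin k → SimpleGraph (Fin n)) :
    DD (wt G) univ = 2 * ∑ i, (G i).edgeSet.ncard := by
  have h : ∀ i, 2 * (G i).edgeSet.ncard = ∑ u, ∑ v, if (G i).Adj u v then 1 else 0 := by
    intro i
    rw [← SimpleGraph.coe_edgeFinset, Set.ncard_coe_finset, ← sum_degrees_eq_twice_card_edges]
    refine Finset.sum_congr rfl fun u _ => ?_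
    rw [← SimpleGraph.card_neighborFinset_eq_degree, SimpleGraph.neighborFinset_eq_filter,
      Finset.card_filter]
  rw [Finset.mul_sum, Finset.sum_congr rfl fun i _ => h i, Finset.sum_comm]
  unfold DD wt
  refine Finset.sum_congr rfl fun u _ => ?_
  rw [Finset.sum_comm]
  refine Finset.sum_congr rfl fun v _ => ?_
  rw [Finset.card_filter]

lemma rainbow_NR {n k r : ℕ} (hk : 0 < k) (G : Fin k → SimpleGraph (Fin n))
    (hG : RainbowCliqueFree n k r G) (S : Finset (Fin n)) (hS : #S = r) :
    ∃ t < r.choose 2, 2 * t + 2 ≤ DD (low (wt G) t) S := by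
  by_contra hcon
  push Not at hcon
  apply hG
  set E : Finset (Sym2 (Fin n)) := S.offDiag.image Sym2.mk.uncurry with hE
  have hEcard : #E = r.choose 2 := by rw [hE, Sym2.card_image_offDiag, hS]
  let L : Sym2 (Fin n) → Finset (Fin k) := fun e => {i | e ∈ (G i).edgeSet}
  have hL : ∀ u v, #(L s(u, v)) = wt G u v := by
    intro u v; simp [L, wt]
  have hall : ∀ F : Finset E, #F ≤ #(F.biUnion fun e => L e.1) := by
    intro F
    by_contra hF
    push Not at hF
    have hFpos : 0 < #F := by omega
    have hFle : #F ≤ r.choose 2 := by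
      have := Finset.card_le_univ F
      rwa [Fintype.card_coe, hEcard] at this
    have h1 := hcon (#F - 1) (by omega)
    -- ordered low pairs
    have h2 : DD (low (wt G) (#F - 1)) S = #{p ∈ S ×ˢ S | p.1 ≠ p.2 ∧ wt G p.1 p.2 ≤ #F - 1} := by
      rw [Finset.card_filter, Finset.sum_product]; rfl
    have h3 : 2 * #F ≤ #{p ∈ S ×ˢ S | p.1 ≠ p.2 ∧ wt G p.1 p.2 ≤ #F - 1} := by
      have h4 : ∑ e ∈ F.map (Function.Embedding.subtype _),
          #{p ∈ {p ∈ S ×ˢ S | p.1 ≠ p.2 ∧ wt G p.1 p.2 ≤ #F - 1} | s(p.1, p.2) = e} ≤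
          #{p ∈ S ×ˢ S | p.1 ≠ p.2 ∧ wt G p.1 p.2 ≤ #F - 1} := by
        rw [← Finset.card_biUnion]
        · refine Finset.card_le_card ?_
          intro p hp
          obtain ⟨e, _, he⟩ := Finset.mem_biUnion.mp hp
          exact (Finset.mem_filter.mp he).1
        · intro e _ e' _ hee'
          refine Finset.disjoint_left.mpr fun p hp hp' => hee' ?_
          rw [← (Finset.mem_filter.mp hp).2, ← (Finset.mem_filter.mp hp').2]
      refine le_trans ?_ h4
      have h8 : 2 * #F = #(F.map (Function.Embedding.subtype _)) • 2 := by
        rw [Finset.card_map, smul_eq_mul, mul_comm]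
      rw [h8]
      refine Finset.card_nsmul_le_sum _ _ _ fun e he => ?_
      obtain ⟨⟨e', he'⟩, heF, rfl⟩ := Finset.mem_map.mp he
      obtain ⟨⟨u, v⟩, huv, rfl⟩ := Finset.mem_image.mp he'
      obtain ⟨hu, hv, hne⟩ := Finset.mem_offDiag.mp huv
      have h5 : wt G u v ≤ #F - 1 := by
        rw [← hL]
        have : L s(u, v) ⊆ F.biUnion fun e => L e.1 :=
          Finset.subset_biUnion_of_mem (fun e : E => L e.1) heF
        have := Finset.card_le_card this
        omega
      have h6 : wt G v u ≤ #F - 1 := by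
        rw [← hL, Sym2.eq_swap, hL]; exact h5
      have h7 : #({(u, v), (v, u)} : Finset (Fin n × Fin n)) = 2 :=
        Finset.card_pair (by simp only [ne_eq, Prod.mk.injEq, not_and]; intro h; exact absurd h hne)
      rw [← h7]
      refine Finset.card_le_card fun p hp => ?_
      simp only [Finset.mem_insert, Finset.mem_singleton] at hp
      rcases hp with rfl | rfl
      · simp only [Finset.mem_filter, Finset.mem_product]
        exact ⟨⟨⟨hu, hv⟩, hne, h5⟩, rfl⟩
      · simp only [Finset.mem_filter, Finset.mem_product]
        exact ⟨⟨⟨hv, hu⟩, fun h => hne h.symm, h6⟩, Sym2.eq_swap⟩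
    omega
  obtain ⟨f, hf, hfL⟩ := (Finset.all_card_le_biUnion_card_iff_exists_injective _).mp hall
  refine ⟨S, fun e => if h : e ∈ E then f ⟨e, h⟩ else ⟨0, hk⟩, hS, ?_, ?_⟩
  · have hmem : ∀ e : Sym2 (Fin n), (¬ e.IsDiag ∧ ∀ v ∈ e, v ∈ S) → e ∈ E := by
      intro e
      induction e using Sym2.ind with
      | _ u v =>
        rintro ⟨h1, h2⟩
        refine Finset.mem_image.mpr ⟨(u, v), Finset.mem_offDiag.mpr ⟨h2 u (by simp), h2 v (by simp), ?_⟩, rfl⟩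
        simpa using h1
    intro e he e' he' hee
    have h1 := hmem e he
    have h2 := hmem e' he'
    simp only [h1, h2, dif_pos] at hee
    exact congrArg Subtype.val (hf hee)
  · intro u hu v hv huv
    have h1 : s(u, v) ∈ E := Finset.mem_image.mpr ⟨(u, v), Finset.mem_offDiag.mpr ⟨hu, hv, huv⟩, rfl⟩
    simp only [h1, dif_pos]
    have := hfL ⟨s(u, v), h1⟩
    simpa [L] using this

end Families

lemma rainbow_small {s n k c m : ℕ}
    (hP : (s = 3 ∧ c = 5 ∧ m = 6 ∧ (k = 6 ∨ k = 7 ∨ k = 8)) ∨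
      (s = 4 ∧ c = 9 ∧ m = 10 ∧ (k = 10 ∨ k = 11 ∨ k = 12)))
    (hn : s ≤ n) (G : Fin k → SimpleGraph (Fin n)) (hG : RainbowCliqueFree n k (s + 1) G) :
    ∑ i, (G i).edgeSet.ncard ≤ max (c * n.choose 2) (k * turanE s n) := by
  have hm : m = (s + 1).choose 2 := by
    rcases hP with ⟨rfl, _, rfl, _⟩ | ⟨rfl, _, rfl, _⟩ <;> rfl
  have h := weights hP (w := wt G) (fun u v => by
      unfold wt
      classical
      congr 1
      ext i
      simp [(G i).adj_comm u v])
    (fun u => by simp [wt])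
    (fun u v => by
      unfold wt
      exact (Finset.card_le_univ _).trans (by simp))
    (fun S hS => hm ▸ rainbow_NR (by omega) G hG S hS) univ (by simpa using hn)
  rw [DD_wt, Finset.card_univ, Fintype.card_fin] at h
  have h2 : n * (n - 1) = 2 * n.choose 2 := by
    rw [Nat.choose_two_right, Nat.mul_div_cancel' (Nat.even_mul_pred_self n).two_dvd]
  rw [h2, ← mul_assoc, ← mul_assoc, mul_comm c, mul_comm k, mul_assoc, mul_assoc] at h
  omega

lemma RainbowCliqueFree.comp {n k l r : ℕ} {G : Fin k → SimpleGraph (Fin n)}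
    (hG : RainbowCliqueFree n k r G) (f : Fin l → Fin k) (hf : Function.Injective f) :
    RainbowCliqueFree n l r (G ∘ f) := by
  rintro ⟨S, c, h1, h2, h3⟩
  exact hG ⟨S, f ∘ c, h1, fun a ha b hb hab => h2 ha hb (hf hab), h3⟩

lemma rainbow_large {s n k₀ t : ℕ} (hk₀ : 0 < k₀)
    (h : ∀ G : Fin k₀ → SimpleGraph (Fin n), RainbowCliqueFree n k₀ s G →
      ∑ i, (G i).edgeSet.ncard ≤ k₀ * t) (k : ℕ) (hk : k₀ ≤ k) :
    ∀ G : Fin k → SimpleGraph (Fin n), RainbowCliqueFree n k s G →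
      ∑ i, (G i).edgeSet.ncard ≤ k * t := by
  induction k, hk using Nat.le_induction with
  | base => exact h
  | succ k hk ih =>
    intro G hG
    have h1 : ∀ j : Fin (k + 1), ∑ i, (G i).edgeSet.ncard ≤ (G j).edgeSet.ncard + k * t := by
      intro j
      rw [Fin.sum_univ_succAbove _ j]
      have := ih _ (hG.comp j.succAbove Fin.succAbove_right_injective)
      simp only [Function.comp_apply] at this
      omega
    have h2 := Finset.sum_le_sum fun j (_ : j ∈ univ) => h1 j
    rw [Finset.sum_const, Finset.sum_add_distrib, Finset.sum_const] at h2
    simp only [Finset.card_univ, Fintype.card_fin, smul_eq_mul] at h2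
    have h3 : k * ∑ i, (G i).edgeSet.ncard ≤ k * ((k + 1) * t) := by nlinarith
    exact Nat.le_of_mul_le_mul_left h3 (by omega)

lemma choose_le_three (n : ℕ) : 5 * n.choose 2 ≤ 8 * turanE 3 n := by
  have := tau4_eight n
  have h2 : n * (n - 1) = 2 * n.choose 2 := by
    rw [Nat.choose_two_right, Nat.mul_div_cancel' (Nat.even_mul_pred_self n).two_dvd]
  omega

lemma choose_le_four (n : ℕ) : 9 * n.choose 2 ≤ 12 * turanE 4 n := by
  have := tau4_twelve n
  have h2 : n * (n - 1) = 2 * n.choose 2 := by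
    rw [Nat.choose_two_right, Nat.mul_div_cancel' (Nat.even_mul_pred_self n).two_dvd]
  omega

/-- If `r ∈ {4,5}`, `n ≥ r−1`, `k ≥ C(r,2)` and `(G_1, …, G_k)` is rainbow `K_r`-free, then
`Σ_i |E(G_i)| ≤ max{(C(r,2)−1)·C(n,2), k·t_{r−1}(n)}`. -/
theorem rainbow_turan_r45 (r n k : ℕ) (hr : r = 4 ∨ r = 5)
    (hn : r - 1 ≤ n) (hk : r.choose 2 ≤ k)
    (G : Fin k → SimpleGraph (Fin n)) (hG : RainbowCliqueFree n k r G) :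
    ∑ i, (G i).edgeSet.ncard ≤
      max ((r.choose 2 - 1) * n.choose 2) (k * turanE (r - 1) n) := by
  rcases hr with rfl | rfl
  · simp only [show Nat.choose 4 2 = 6 from rfl] at hk ⊢
    norm_num at hn ⊢
    by_cases h8 : k ≤ 8
    · have := rainbow_small (s := 3) (Or.inl ⟨rfl, rfl, rfl, by omega⟩) hn G hG
      simpa using this
    · right
      refine rainbow_large (k₀ := 8) (by omega) (fun G' hG' => ?_) k (by omega) G hG
      have h1 := rainbow_small (s := 3) (Or.inl ⟨rfl, rfl, rfl, by omega⟩) hn G' hG'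
      rwa [max_eq_right (choose_le_three n)] at h1
  · simp only [show Nat.choose 5 2 = 10 from rfl] at hk ⊢
    norm_num at hn ⊢
    by_cases h8 : k ≤ 12
    · have := rainbow_small (s := 4) (Or.inr ⟨rfl, rfl, rfl, by omega⟩) hn G hG
      simpa using this
    · right
      refine rainbow_large (k₀ := 12) (by omega) (fun G' hG' => ?_) k (by omega) G hG
      have h1 := rainbow_small (s := 4) (Or.inr ⟨rfl, rfl, rfl, by omega⟩) hn G' hG'
      rwa [max_eq_right (choose_le_four n)] at h1
end

section
/- Let r ∈ {4,5} and n ≥ r be integers, set k_2 = ⌈(C(r,2)−1)·C(n,2) / t_{r−1}(n)⌉ and k_1 = k_2 − 1. Let f be a k_1-weighting on the complete graph K_n on vertex set [n] such that no r-clique of K_n has weight sequence bound (1, 2, …, C(r,2)). Then Σ_e f(e) ≤ (C(r,2) − 1)·C(n,2). -/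
open Finset SimpleGraph

/-- The `r`-clique `S` has weight sequence bound `(1, 2, …, C(r,2))` w.r.t. `f`. -/
def HasWSB (n r : ℕ) (f : Sym2 (Fin n) → ℕ) (S : Finset (Fin n)) : Prop :=
  ∃ g : Fin (r.choose 2) → Sym2 (Fin n),
    Function.Injective g ∧
    (∀ i, ¬ (g i).IsDiag ∧ ∀ v ∈ g i, v ∈ S) ∧
    ∀ i : Fin (r.choose 2), (i : ℕ) + 1 ≤ f (g i)

/-- `k₂ = ⌈(C(r,2)−1)·C(n,2) / t_{r−1}(n)⌉`. -/
def kTwo (r n : ℕ) : ℕ :=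
  ⌈(((r.choose 2 - 1) * n.choose 2 : ℕ) : ℚ) / ((turanE (r - 1) n : ℕ) : ℚ)⌉₊


section Aux
variable {V : Type*} [DecidableEq V]

/-- Twice the total weight inside `s`. -/
def WW (g : V → V → ℕ) (s : Finset V) : ℕ := ∑ x ∈ s, ∑ y ∈ s, g x y

def w4 (g : V → V → ℕ) (a b c d : V) : Fin 6 → ℕ :=
  ![g a b, g a c, g a d, g b c, g b d, g c d]

def w5 (g : V → V → ℕ) (x a b c d : V) : Fin 10 → ℕ :=
  ![g x a, g x b, g x c, g x d, g a b, g a c, g a d, g b c, g b d, g c d]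

def Good4 (g : V → V → ℕ) (a b c d : V) : Prop :=
  ∃ σ : Fin 6 → Fin 6, Function.Injective σ ∧ ∀ i : Fin 6, (i : ℕ) + 1 ≤ w4 g a b c d (σ i)

def Good5 (g : V → V → ℕ) (x a b c d : V) : Prop :=
  ∃ σ : Fin 10 → Fin 10, Function.Injective σ ∧ ∀ i : Fin 10, (i : ℕ) + 1 ≤ w5 g x a b c d (σ i)

def No3 (g : V → V → ℕ) (s : Finset V) : Prop :=
  ∀ a ∈ s, ∀ b ∈ s, ∀ c ∈ s, a ≠ b → a ≠ c → b ≠ c → ¬ (6 ≤ g a b ∧ 5 ≤ g a c ∧ 4 ≤ g b c)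

def No4 (g : V → V → ℕ) (s : Finset V) : Prop :=
  ∀ a ∈ s, ∀ b ∈ s, ∀ c ∈ s, ∀ d ∈ s, a ≠ b → a ≠ c → a ≠ d → b ≠ c → b ≠ d → c ≠ d →
    ¬ Good4 g a b c d

def No5 (g : V → V → ℕ) (s : Finset V) : Prop :=
  ∀ x ∈ s, ∀ a ∈ s, ∀ b ∈ s, ∀ c ∈ s, ∀ d ∈ s, x ≠ a → x ≠ b → x ≠ c → x ≠ d →
    a ≠ b → a ≠ c → a ≠ d → b ≠ c → b ≠ d → c ≠ d → ¬ Good5 g x a b c d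

lemma WW_split (g : V → V → ℕ) (hs : ∀ x y, g x y = g y x) (s T : Finset V) (h : T ⊆ s) :
    WW g s = WW g (s \ T) + WW g T + 2 * ∑ x ∈ s \ T, ∑ t ∈ T, g x t := by
  unfold WW
  have e : ∀ φ : V → ℕ, ∑ x ∈ s, φ x = ∑ x ∈ s \ T, φ x + ∑ x ∈ T, φ x :=
    fun φ => (Finset.sum_sdiff h).symm
  rw [e]
  simp_rw [e]
  rw [Finset.sum_add_distrib, Finset.sum_add_distrib]
  have : ∑ x ∈ T, ∑ t ∈ s \ T, g x t = ∑ x ∈ s \ T, ∑ t ∈ T, g x t := by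
    rw [Finset.sum_comm]
    simp_rw [fun x y => hs x y]
  rw [this]; ring

lemma WW_le (g : V → V → ℕ) (h0 : ∀ x, g x x = 0) (s : Finset V) (c : ℕ)
    (h : ∀ x ∈ s, ∀ y ∈ s, x ≠ y → g x y ≤ c) : WW g s + c * s.card ≤ c * (s.card * s.card) := by
  unfold WW
  have : ∀ x ∈ s, ∑ y ∈ s, g x y + c ≤ c * s.card := by
    intro x hx
    rw [← Finset.add_sum_erase s _ hx, h0]
    have := Finset.sum_le_card_nsmul (s.erase x) (g x) c (by
      intro y hy
      rw [Finset.mem_erase] at hy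
      exact h x hx y hy.2 (Ne.symm hy.1))
    rw [Finset.card_erase_of_mem hx, smul_eq_mul] at this
    have h1 : 1 ≤ s.card := Finset.card_pos.mpr ⟨x, hx⟩
    obtain ⟨m, hm⟩ := Nat.exists_eq_add_of_le h1
    rw [hm] at this ⊢
    simp at this
    nlinarith
  have h2 := Finset.sum_le_sum this
  rw [Finset.sum_add_distrib] at h2
  simp at h2
  nlinarith

lemma sum_def (R : Finset V) (h : V → ℕ) (c : ℕ) (hc : ∀ x ∈ R, h x ≤ c) (x y : V) (hx : x ∈ R)
    (hy : y ∈ R) (hxy : x ≠ y) : ∑ z ∈ R, h z + 2 * c ≤ c * R.card + h x + h y := by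
  have hy' : y ∈ R.erase x := Finset.mem_erase.mpr ⟨hxy.symm, hy⟩
  rw [← Finset.add_sum_erase R _ hx, ← Finset.add_sum_erase _ _ hy']
  have := Finset.sum_le_card_nsmul ((R.erase x).erase y) h c (by
      intro z hz
      exact hc z (Finset.mem_of_mem_erase (Finset.mem_of_mem_erase hz)))
  have c1 := Finset.card_erase_add_one hx
  have c2 := Finset.card_erase_add_one hy'
  rw [← c1, ← c2]
  simp only [smul_eq_mul] at this
  nlinarith

lemma sum_le' (R : Finset V) (h : V → ℕ) (c : ℕ) (hc : ∀ x ∈ R, h x ≤ c) :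
    ∑ z ∈ R, h z ≤ c * R.card := by
  have := Finset.sum_le_card_nsmul R h c hc
  simp only [smul_eq_mul] at this
  linarith

lemma edge_split (g : V → V → ℕ) (hs : ∀ x y, g x y = g y x) (h0 : ∀ x, g x x = 0) (s : Finset V)
    (u v : V) (hu : u ∈ s) (hv : v ∈ s) (huv : u ≠ v) :
    ∃ R : Finset V, R ⊆ s ∧ (∀ x ∈ R, x ≠ u ∧ x ≠ v) ∧ s.card = R.card + 2 ∧
      WW g s = WW g R + 2 * g u v + 2 * ∑ x ∈ R, (g x u + g x v) := by
  have hT : ({u, v} : Finset V) ⊆ s := by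
    intro x; simp; rintro (rfl | rfl) <;> assumption
  refine ⟨s \ {u, v}, Finset.sdiff_subset, ?_, ?_, ?_⟩
  · intro x hx; simp at hx; tauto
  · have := Finset.card_sdiff_add_card_eq_card hT
    rw [Finset.card_pair huv] at this; omega
  · rw [WW_split g hs s _ hT]
    have : WW g {u, v} = 2 * g u v := by
      unfold WW
      simp [Finset.sum_pair huv, h0, hs v u]; ring
    rw [this]
    simp [Finset.sum_pair huv]

lemma tri_split (g : V → V → ℕ) (hs : ∀ x y, g x y = g y x) (h0 : ∀ x, g x x = 0) (s : Finset V)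
    (u v w : V) (hu : u ∈ s) (hv : v ∈ s) (hw : w ∈ s) (huv : u ≠ v) (huw : u ≠ w) (hvw : v ≠ w) :
    ∃ R : Finset V, R ⊆ s ∧ (∀ x ∈ R, x ≠ u ∧ x ≠ v ∧ x ≠ w) ∧ s.card = R.card + 3 ∧
      WW g s = WW g R + 2 * (g u v + g u w + g v w) + 2 * ∑ x ∈ R, (g x u + g x v + g x w) := by
  have hT : ({u, v, w} : Finset V) ⊆ s := by
    intro x; simp; rintro (rfl | rfl | rfl) <;> assumption
  have e : ∀ φ : V → ℕ, ∑ x ∈ ({u, v, w} : Finset V), φ x = φ u + φ v + φ w := by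
    intro φ
    rw [Finset.sum_insert (by simp [huv, huw]), Finset.sum_pair hvw]; ring
  refine ⟨s \ {u, v, w}, Finset.sdiff_subset, ?_, ?_, ?_⟩
  · intro x hx; simp at hx; tauto
  · have := Finset.card_sdiff_add_card_eq_card hT
    have h3 : ({u, v, w} : Finset V).card = 3 := Finset.card_eq_three.mpr ⟨u, v, w, huv, huw, hvw, rfl⟩
    omega
  · rw [WW_split g hs s _ hT]
    have : WW g {u, v, w} = 2 * (g u v + g u w + g v w) := by
      unfold WW
      simp_rw [e, h0, hs v u, hs w u, hs w v]; ring
    rw [this]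
    simp_rw [e]

lemma quad_split (g : V → V → ℕ) (hs : ∀ x y, g x y = g y x) (h0 : ∀ x, g x x = 0) (s : Finset V)
    (a b c d : V) (ha : a ∈ s) (hb : b ∈ s) (hc : c ∈ s) (hd : d ∈ s) (hab : a ≠ b) (hac : a ≠ c)
    (had : a ≠ d) (hbc : b ≠ c) (hbd : b ≠ d) (hcd : c ≠ d) :
    ∃ R : Finset V, R ⊆ s ∧ (∀ x ∈ R, x ≠ a ∧ x ≠ b ∧ x ≠ c ∧ x ≠ d) ∧ s.card = R.card + 4 ∧
      WW g s = WW g R + 2 * (g a b + g a c + g a d + g b c + g b d + g c d)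
        + 2 * ∑ x ∈ R, (g x a + g x b + g x c + g x d) := by
  have hT : ({a, b, c, d} : Finset V) ⊆ s := by
    intro x; simp; rintro (rfl | rfl | rfl | rfl) <;> assumption
  have e : ∀ φ : V → ℕ, ∑ x ∈ ({a, b, c, d} : Finset V), φ x = φ a + φ b + φ c + φ d := by
    intro φ
    rw [Finset.sum_insert (by simp [hab, hac, had]), Finset.sum_insert (by simp [hbc, hbd]),
      Finset.sum_pair hcd]; ring
  refine ⟨s \ {a, b, c, d}, Finset.sdiff_subset, ?_, ?_, ?_⟩
  · intro x hx; simp at hx; tauto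
  · have := Finset.card_sdiff_add_card_eq_card hT
    have h3 : ({a, b, c, d} : Finset V).card = 4 := by
      have := e (fun _ => 1); simpa using this
    omega
  · rw [WW_split g hs s _ hT]
    have : WW g {a, b, c, d} = 2 * (g a b + g a c + g a d + g b c + g b d + g c d) := by
      unfold WW
      simp_rw [e, h0, hs b a, hs c a, hs c b, hs d a, hs d b, hs d c]; ring
    rw [this]
    simp_rw [e]

lemma tri_local (g : V → V → ℕ) (u v w x : V) (k : ℕ) (hk : 6 ≤ k)
    (h1 : 6 ≤ g u v) (h2 : 5 ≤ g u w) (h3 : 4 ≤ g v w) (hn : ¬ Good4 g u v w x)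
    (k1 : g u x ≤ k) (k2 : g v x ≤ k) (k3 : g w x ≤ k) : g u x + g v x + g w x ≤ 2 * k := by
  have key : ∀ α β γ : Fin 6, Function.Injective ![α, β, γ, 3, 1, 0] →
      ¬ (1 ≤ w4 g u v w x α ∧ 2 ≤ w4 g u v w x β ∧ 3 ≤ w4 g u v w x γ) := by
    rintro α β γ hi ⟨e1, e2, e3⟩
    refine hn ⟨_, hi, ?_⟩
    intro i
    fin_cases i
    · simpa using e1
    · simpa using e2
    · simpa using e3
    · simpa [w4] using h3
    · simpa [w4] using h2
    · simpa [w4] using h1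
  have p1 := key 2 4 5 (by decide)
  have p2 := key 2 5 4 (by decide)
  have p3 := key 4 2 5 (by decide)
  have p4 := key 4 5 2 (by decide)
  have p5 := key 5 2 4 (by decide)
  have p6 := key 5 4 2 (by decide)
  simp [w4] at p1 p2 p3 p4 p5 p6
  omega

lemma edge_local (g : V → V → ℕ) (u v x y : V) (h1 : 6 ≤ g u v) (hn : ¬ Good4 g u v x y)
    (k1 : g u x ≤ 7) (k2 : g v x ≤ 7) (k3 : g u y ≤ 7) (k4 : g v y ≤ 7)
    (n1 : ¬ (5 ≤ g u x ∧ 4 ≤ g v x)) (n2 : ¬ (5 ≤ g v x ∧ 4 ≤ g u x))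
    (n3 : ¬ (5 ≤ g u y ∧ 4 ≤ g v y)) (n4 : ¬ (5 ≤ g v y ∧ 4 ≤ g u y))
    (hxy : 3 ≤ g x y) : g u x + g v x + (g u y + g v y) ≤ 17 := by
  have key : ∀ c a d b : Fin 6, Function.Injective ![c, a, 5, d, b, 0] →
      ¬ (1 ≤ w4 g u v x y c ∧ 2 ≤ w4 g u v x y a ∧ 4 ≤ w4 g u v x y d ∧ 5 ≤ w4 g u v x y b) := by
    rintro c a d b hi ⟨e1, e2, e3, e4⟩
    refine hn ⟨_, hi, ?_⟩
    intro i
    fin_cases i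
    · simpa using e1
    · simpa using e2
    · simpa [w4] using hxy
    · simpa using e3
    · simpa using e4
    · simpa [w4] using h1
  have p1 := key 2 1 4 3 (by decide)
  have p2 := key 4 1 2 3 (by decide)
  have p3 := key 2 3 4 1 (by decide)
  have p4 := key 4 3 2 1 (by decide)
  have q1 := key 1 2 3 4 (by decide)
  have q2 := key 3 2 1 4 (by decide)
  have q3 := key 1 4 3 2 (by decide)
  have q4 := key 3 4 1 2 (by decide)
  simp [w4] at p1 p2 p3 p4 q1 q2 q3 q4
  omega

lemma No3.mono {g : V → V → ℕ} {s t : Finset V} (h : No3 g s) (ht : t ⊆ s) : No3 g t :=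
  fun a ha b hb c hc => h a (ht ha) b (ht hb) c (ht hc)

lemma No4.mono {g : V → V → ℕ} {s t : Finset V} (h : No4 g s) (ht : t ⊆ s) : No4 g t :=
  fun a ha b hb c hc d hd => h a (ht ha) b (ht hb) c (ht hc) d (ht hd)

lemma No5.mono {g : V → V → ℕ} {s t : Finset V} (h : No5 g s) (ht : t ⊆ s) : No5 g t :=
  fun x hx a ha b hb c hc d hd => h x (ht hx) a (ht ha) b (ht hb) c (ht hc) d (ht hd)

def H7 (n : ℕ) : ℕ := [0, 0, 2, 2, 1, 1].getD n 0
def F7 (n : ℕ) : ℕ := [0, 0, 2, 6, 5, 6, 9, 7, 7, 9, 6, 5, 6, 2].getD n 0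
def E7 (n : ℕ) : ℕ := [0, 0, 2, 6, 12, 9, 9, 9, 12, 9, 6, 5, 6, 0].getD n 0
def H6 (n : ℕ) : ℕ := [0, 0, 1].getD n 0
def F6 (n : ℕ) : ℕ := [0, 0, 1, 3].getD n 0
def E6 (n : ℕ) : ℕ := [0, 0, 1, 3, 6].getD n 0

lemma H7_zero (n : ℕ) (h : 6 ≤ n) : H7 n = 0 := by
  unfold H7; rw [List.getD_eq_default]; simpa using h
lemma F7_zero (n : ℕ) (h : 14 ≤ n) : F7 n = 0 := by
  unfold F7; rw [List.getD_eq_default]; simpa using h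
lemma E7_zero (n : ℕ) (h : 13 ≤ n) : E7 n = 0 := by
  rcases Nat.eq_or_lt_of_le h with rfl | h
  · rfl
  · unfold E7; rw [List.getD_eq_default]; simp; omega
lemma H6_zero (n : ℕ) (h : 3 ≤ n) : H6 n = 0 := by
  unfold H6; rw [List.getD_eq_default]; simpa using h
lemma F6_zero (n : ℕ) (h : 4 ≤ n) : F6 n = 0 := by
  unfold F6; rw [List.getD_eq_default]; simpa using h
lemma E6_zero (n : ℕ) (h : 5 ≤ n) : E6 n = 0 := by
  unfold E6; rw [List.getD_eq_default]; simpa using h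

lemma H7_step (m : ℕ) (hm : 2 ≤ m) : H7 m ≤ H7 (m + 2) + 1 := by
  by_cases h : m < 6
  · interval_cases m <;> decide
  · rw [H7_zero m (by omega)]; omega
lemma F7_step (m : ℕ) : F7 m + 6 ≤ F7 (m + 3) + m := by
  by_cases h : m < 14
  · interval_cases m <;> decide
  · rw [F7_zero m (by omega)]; omega
lemma E7_step (m : ℕ) : E7 m + 12 ≤ E7 (m + 4) + 3 * m := by
  by_cases h : m < 14
  · interval_cases m <;> decide
  · rw [E7_zero m (by omega)]; omega
lemma H6_step (m : ℕ) : H6 m + 1 ≤ H6 (m + 2) + m := by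
  by_cases h : m < 4
  · interval_cases m <;> decide
  · rw [H6_zero m (by omega)]; omega
lemma F6_step (m : ℕ) : F6 m + 3 ≤ F6 (m + 3) + 3 * m := by
  by_cases h : m < 4
  · interval_cases m <;> decide
  · rw [F6_zero m (by omega)]; omega
lemma E6_step (m : ℕ) : E6 m + 6 ≤ E6 (m + 4) + 6 * m := by
  by_cases h : m < 5
  · interval_cases m <;> decide
  · rw [E6_zero m (by omega)]; omega
lemma H7_F7 (m : ℕ) : H7 m ≤ F7 m := by
  by_cases h : m < 6
  · interval_cases m <;> decide
  · rw [H7_zero m (by omega)]; omega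
lemma H6_F6 (m : ℕ) : H6 m ≤ F6 m := by
  by_cases h : m < 6
  · interval_cases m <;> decide
  · rw [H6_zero m (by omega)]; omega
lemma F6_E6 (m : ℕ) : F6 m ≤ E6 m := by
  by_cases h : m < 6
  · interval_cases m <;> decide
  · rw [F6_zero m (by omega)]; omega
lemma F7_E7 (m : ℕ) (hm : m ≠ 13) : F7 m ≤ E7 m := by
  by_cases h : m < 14
  · interval_cases m <;> first | decide | omega
  · rw [F7_zero m (by omega)]; omega

lemma no_edge (g : V → V → ℕ) (h0 : ∀ x, g x x = 0) (s : Finset V)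
    (h : ¬ ∃ u ∈ s, ∃ v ∈ s, u ≠ v ∧ 6 ≤ g u v) :
    WW g s + 5 * s.card ≤ 5 * (s.card * s.card) := by
  apply WW_le g h0 s
  intro x hx y hy hxy
  by_contra hc
  exact h ⟨x, hx, y, hy, hxy, by omega⟩

lemma boundH7 (g : V → V → ℕ) (hs : ∀ x y, g x y = g y x) (h0 : ∀ x, g x x = 0)
    (hk : ∀ x y, g x y ≤ 7) : ∀ (n : ℕ) (s : Finset V), s.card = n → No3 g s → No4 g s →
    WW g s + 5 * n ≤ 5 * (n * n) + 2 * H7 n := by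
  intro n
  induction n using Nat.strong_induction_on with
  | _ n ih =>
  intro s hn n3 n4
  by_cases he : ∃ u ∈ s, ∃ v ∈ s, u ≠ v ∧ 6 ≤ g u v
  swap
  · have := no_edge g h0 s he
    rw [hn] at this; omega
  obtain ⟨u, hu, v, hv, huv, h6⟩ := he
  obtain ⟨R, hR, hRn, hc, hW⟩ := edge_split g hs h0 s u v hu hv huv
  have T : ∀ x ∈ R, ¬ (5 ≤ g u x ∧ 4 ≤ g v x) ∧ ¬ (5 ≤ g v x ∧ 4 ≤ g u x) := by
    intro x hx
    have a1 := n3 u hu v hv x (hR hx) huv (hRn x hx).1.symm (hRn x hx).2.symm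
    have a2 := n3 v hv u hu x (hR hx) huv.symm (hRn x hx).2.symm (hRn x hx).1.symm
    rw [hs v u] at a2
    tauto
  have loc : ∀ x ∈ R, g x u + g x v ≤ 10 := by
    intro x hx
    have := T x hx
    have := hk u x
    have := hk v x
    rw [hs x u, hs x v]; omega
  have huv7 := hk u v
  generalize hm : R.card = m at *
  obtain rfl : n = m + 2 := by omega
  by_cases hp : ∀ x ∈ R, ∀ y ∈ R, x ≠ y → g x y ≤ 2
  · have b1 := WW_le g h0 R 2 hp
    have b2 := sum_le' R _ 10 loc
    rw [hm] at b1 b2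
    rcases Nat.lt_or_ge m 2 with h | h
    · interval_cases m <;> simp [H7] <;> omega
    · nlinarith
  · push Not at hp
    obtain ⟨x, hx, y, hy, hxy, h3⟩ := hp
    have b2 := sum_def R _ 10 loc x y hx hy hxy
    have b3 := edge_local g u v x y h6
      (n4 u hu v hv x (hR hx) y (hR hy) huv (hRn x hx).1.symm (hRn y hy).1.symm
        (hRn x hx).2.symm (hRn y hy).2.symm hxy) (hk _ _) (hk _ _) (hk _ _) (hk _ _)
      (T x hx).1 (T x hx).2 (T y hy).1 (T y hy).2 h3
    rw [hs u x, hs v x, hs u y, hs v y] at b3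
    have m2 : 2 ≤ m := by
      rw [← hm]
      exact Finset.one_lt_card.mpr ⟨x, hx, y, hy, hxy⟩
    have b4 := ih m (by omega) R hm (n3.mono hR) (n4.mono hR)
    have b5 := H7_step m m2
    rw [hm] at b2
    nlinarith

lemma boundH6 (g : V → V → ℕ) (hs : ∀ x y, g x y = g y x) (h0 : ∀ x, g x x = 0)
    (hk : ∀ x y, g x y ≤ 6) : ∀ (n : ℕ) (s : Finset V), s.card = n → No3 g s →
    WW g s + 5 * n ≤ 5 * (n * n) + 2 * H6 n := by
  intro n
  induction n using Nat.strong_induction_on with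
  | _ n ih =>
  intro s hn n3
  by_cases he : ∃ u ∈ s, ∃ v ∈ s, u ≠ v ∧ 6 ≤ g u v
  swap
  · have := no_edge g h0 s he
    rw [hn] at this; omega
  obtain ⟨u, hu, v, hv, huv, h6⟩ := he
  obtain ⟨R, hR, hRn, hc, hW⟩ := edge_split g hs h0 s u v hu hv huv
  have loc : ∀ x ∈ R, g x u + g x v ≤ 9 := by
    intro x hx
    have a1 := n3 u hu v hv x (hR hx) huv (hRn x hx).1.symm (hRn x hx).2.symm
    have a2 := n3 v hv u hu x (hR hx) huv.symm (hRn x hx).2.symm (hRn x hx).1.symm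
    rw [hs v u] at a2
    have := hk u x
    have := hk v x
    rw [hs x u, hs x v]; omega
  have huv7 := hk u v
  generalize hm : R.card = m at *
  obtain rfl : n = m + 2 := by omega
  have b2 := sum_le' R _ 9 loc
  have b4 := ih m (by omega) R hm (n3.mono hR)
  have b5 := H6_step m
  rw [hm] at b2
  nlinarith

lemma tri_step (g : V → V → ℕ) (hs : ∀ x y, g x y = g y x) (h0 : ∀ x, g x x = 0) (k : ℕ)
    (hk6 : 6 ≤ k) (hk : ∀ x y, g x y ≤ k) (s : Finset V) (n3 : ¬ No3 g s) (n4 : No4 g s) :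
    ∃ R, R ⊆ s ∧ s.card = R.card + 3 ∧ WW g s ≤ WW g R + 6 * k + 4 * k * R.card := by
  unfold No3 at n3
  push Not at n3
  obtain ⟨u, hu, v, hv, w, hw, huv, huw, hvw, h6, h5, h4⟩ := n3
  obtain ⟨R, hR, hRn, hc, hW⟩ := tri_split g hs h0 s u v w hu hv hw huv huw hvw
  refine ⟨R, hR, hc, ?_⟩
  have loc : ∀ x ∈ R, g x u + g x v + g x w ≤ 2 * k := by
    intro x hx
    obtain ⟨q1, q2, q3⟩ := hRn x hx
    rw [hs x u, hs x v, hs x w]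
    exact tri_local g u v w x k hk6 h6 h5 h4 (n4 u hu v hv w hw x (hR hx) huv huw q1.symm hvw
      q2.symm q3.symm) (hk _ _) (hk _ _) (hk _ _)
  have b2 := sum_le' R _ _ loc
  have := hk u v
  have := hk u w
  have := hk v w
  nlinarith

lemma boundF7 (g : V → V → ℕ) (hs : ∀ x y, g x y = g y x) (h0 : ∀ x, g x x = 0)
    (hk : ∀ x y, g x y ≤ 7) : ∀ (n : ℕ) (s : Finset V), s.card = n → No4 g s →
    WW g s + 5 * n ≤ 5 * (n * n) + 2 * F7 n := by
  intro n
  induction n using Nat.strong_induction_on with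
  | _ n ih =>
  intro s hn n4
  by_cases n3 : No3 g s
  · have := boundH7 g hs h0 hk n s hn n3 n4
    have := H7_F7 n
    omega
  obtain ⟨R, hR, hc, hW⟩ := tri_step g hs h0 7 (by norm_num) hk s n3 n4
  generalize hm : R.card = m at *
  obtain rfl : n = m + 3 := by omega
  have b4 := ih m (by omega) R hm (n4.mono hR)
  have b5 := F7_step m
  nlinarith

lemma boundF6 (g : V → V → ℕ) (hs : ∀ x y, g x y = g y x) (h0 : ∀ x, g x x = 0)
    (hk : ∀ x y, g x y ≤ 6) : ∀ (n : ℕ) (s : Finset V), s.card = n → No4 g s →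
    WW g s + 5 * n ≤ 5 * (n * n) + 2 * F6 n := by
  intro n
  induction n using Nat.strong_induction_on with
  | _ n ih =>
  intro s hn n4
  by_cases n3 : No3 g s
  · have := boundH6 g hs h0 hk n s hn n3
    have := H6_F6 n
    omega
  obtain ⟨R, hR, hc, hW⟩ := tri_step g hs h0 6 (by norm_num) hk s n3 n4
  generalize hm : R.card = m at *
  obtain rfl : n = m + 3 := by omega
  have b4 := ih m (by omega) R hm (n4.mono hR)
  have b5 := F6_step m
  nlinarith

/-- The truncated shift `g - 4`. -/
def sh (g : V → V → ℕ) : V → V → ℕ := fun x y => g x y - 4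

lemma w4_sh (g : V → V → ℕ) (a b c d : V) (i : Fin 6) :
    w4 (sh g) a b c d i = w4 g a b c d i - 4 := by
  fin_cases i <;> rfl

lemma quad_local (g : V → V → ℕ) (a b c d x : V) (k : ℕ) (hk10 : 10 ≤ k) (hk : ∀ x y, g x y ≤ k)
    (h4 : Good4 (sh g) a b c d) (h5 : ¬ Good5 g x a b c d) :
    g x a + g x b + g x c + g x d ≤ 3 * k := by
  obtain ⟨σ, hσ, hw⟩ := h4
  set h : Fin 4 → ℕ := ![g x a, g x b, g x c, g x d] with hh
  have hle : ∀ i, h i ≤ k := by intro i; fin_cases i <;> exact hk _ _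
  have hmono : Monotone (h ∘ Tuple.sort h) := Tuple.monotone_sort h
  set τ := Tuple.sort h with hτ
  have hsum : g x a + g x b + g x c + g x d = h (τ 0) + h (τ 1) + h (τ 2) + h (τ 3) := by
    have := Equiv.sum_comp τ h
    rw [Fin.sum_univ_four, Fin.sum_univ_four] at this
    rw [this]; rfl
  have wA : ∀ j : Fin 4, w5 g x a b c d (Fin.castLE (by norm_num) j) = h j := by
    intro j; fin_cases j <;> rfl
  have wB : ∀ j : Fin 6, w5 g x a b c d (Fin.natAdd 4 j) = w4 g a b c d j := by
    intro j; fin_cases j <;> rfl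
  have hex : ¬ ∀ i : Fin 4, (i : ℕ) + 1 ≤ h (τ i) := by
    intro hall
    apply h5
    refine ⟨fun i => if hi : (i : ℕ) < 4 then Fin.castLE (by norm_num) (τ ⟨i, hi⟩)
      else Fin.natAdd 4 (σ ⟨(i : ℕ) - 4, by omega⟩), ?_, ?_⟩
    · intro i j hij
      dsimp only at hij
      split_ifs at hij with h1 h2 h2
      · have := τ.injective (Fin.castLE_injective _ hij)
        simp at this; omega
      · have := congrArg Fin.val hij
        simp at this
        have := (τ ⟨i, h1⟩).2
        omega
      · have := congrArg Fin.val hij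
        simp at this
        have := (τ ⟨j, h2⟩).2
        omega
      · have e : σ ⟨(i : ℕ) - 4, by omega⟩ = σ ⟨(j : ℕ) - 4, by omega⟩ := by
          have := congrArg Fin.val hij
          simp at this
          exact Fin.ext this
        have := hσ e
        simp at this; omega
    · intro i
      dsimp only
      split_ifs with h1
      · rw [wA]; exact hall ⟨i, h1⟩
      · rw [wB]
        have := hw ⟨(i : ℕ) - 4, by omega⟩
        rw [w4_sh] at this
        simp only at this
        omega
  have m01 : h (τ 0) ≤ h (τ 1) := hmono (by decide)
  have m12 : h (τ 1) ≤ h (τ 2) := hmono (by decide)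
  have m23 : h (τ 2) ≤ h (τ 3) := hmono (by decide)
  have l0 := hle (τ 0)
  have l1 := hle (τ 1)
  have l2 := hle (τ 2)
  have l3 := hle (τ 3)
  rw [hsum]
  by_contra hcon
  apply hex
  intro i
  fin_cases i <;> simp <;> omega

lemma quad_step (g : V → V → ℕ) (hs : ∀ x y, g x y = g y x) (h0 : ∀ x, g x x = 0) (k : ℕ)
    (hk10 : 10 ≤ k) (hk : ∀ x y, g x y ≤ k) (s : Finset V) (n4 : ¬ No4 (sh g) s) (n5 : No5 g s) :
    ∃ R, R ⊆ s ∧ s.card = R.card + 4 ∧ WW g s ≤ WW g R + 12 * k + 6 * k * R.card := by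
  unfold No4 at n4
  push Not at n4
  obtain ⟨a, ha, b, hb, c, hc, d, hd, hab, hac, had, hbc, hbd, hcd, hg⟩ := n4
  obtain ⟨R, hR, hRn, hcard, hW⟩ :=
    quad_split g hs h0 s a b c d ha hb hc hd hab hac had hbc hbd hcd
  refine ⟨R, hR, hcard, ?_⟩
  have loc : ∀ x ∈ R, g x a + g x b + g x c + g x d ≤ 3 * k := by
    intro x hx
    obtain ⟨q1, q2, q3, q4⟩ := hRn x hx
    exact quad_local g a b c d x k hk10 hk hg
      (n5 x (hR hx) a ha b hb c hc d hd q1 q2 q3 q4 hab hac had hbc hbd hcd)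
  have b2 := sum_le' R _ _ loc
  have := hk a b
  have := hk a c
  have := hk a d
  have := hk b c
  have := hk b d
  have := hk c d
  nlinarith

lemma WW_sh (g : V → V → ℕ) (h0 : ∀ x, g x x = 0) (s : Finset V) :
    WW g s + 4 * s.card ≤ WW (sh g) s + 4 * (s.card * s.card) := by
  unfold WW
  have : ∀ x ∈ s, ∑ y ∈ s, g x y + 4 ≤ ∑ y ∈ s, sh g x y + 4 * s.card := by
    intro x hx
    have e1 := Finset.add_sum_erase s (g x) hx
    have e2 := Finset.add_sum_erase s (sh g x) hx
    have : ∑ y ∈ s.erase x, g x y ≤ ∑ y ∈ s.erase x, (sh g x y + 4) := by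
      apply Finset.sum_le_sum
      intro y _
      unfold sh; omega
    rw [Finset.sum_add_distrib] at this
    simp only [Finset.sum_const, smul_eq_mul] at this
    have hc := Finset.card_erase_add_one hx
    rw [h0] at e1
    omega
  have h2 := Finset.sum_le_sum this
  rw [Finset.sum_add_distrib, Finset.sum_add_distrib] at h2
  simp only [Finset.sum_const, smul_eq_mul] at h2
  nlinarith

lemma tri_local2 (g : V → V → ℕ) (u v w x : V)
    (h1 : 6 ≤ g u v) (h2 : 5 ≤ g u w) (h3 : 4 ≤ g v w) (hn : ¬ Good4 g u v w x)
    (k1 : g u x ≤ 7) (k2 : g v x ≤ 7) (k3 : g w x ≤ 7) :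
    g u x = 0 ∨ g v x = 0 ∨ g w x = 0 ∨ g u x + g v x + g w x ≤ 9 := by
  have key : ∀ α β γ : Fin 6, Function.Injective ![α, β, γ, 3, 1, 0] →
      ¬ (1 ≤ w4 g u v w x α ∧ 2 ≤ w4 g u v w x β ∧ 3 ≤ w4 g u v w x γ) := by
    rintro α β γ hi ⟨e1, e2, e3⟩
    refine hn ⟨_, hi, ?_⟩
    intro i
    fin_cases i
    · simpa using e1
    · simpa using e2
    · simpa using e3
    · simpa [w4] using h3
    · simpa [w4] using h2
    · simpa [w4] using h1
  have p1 := key 2 4 5 (by decide)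
  have p2 := key 2 5 4 (by decide)
  have p3 := key 4 2 5 (by decide)
  have p4 := key 4 5 2 (by decide)
  have p5 := key 5 2 4 (by decide)
  have p6 := key 5 4 2 (by decide)
  simp [w4] at p1 p2 p3 p4 p5 p6
  omega

lemma five_local (g : V → V → ℕ) (x y u v w : V) (hk : ∀ x y, g x y ≤ 11) (h5 : ¬ Good5 g x y u v w)
    (h1 : 10 ≤ g u v) (h2 : 9 ≤ g u w) (h3 : 8 ≤ g v w) (hxy : 1 ≤ g x y)
    (hx : g x u ≤ 4 ∨ g x v ≤ 4 ∨ g x w ≤ 4) (hy : g y u ≤ 4 ∨ g y v ≤ 4 ∨ g y w ≤ 4) :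
    g x u + g x v + g x w + (g y u + g y v + g y w) ≤ 50 := by
  by_contra hcon
  have key : ∀ c1 a1 c2 c3 a2 a3 : Fin 10,
      Function.Injective ![0, c1, a1, 9, 8, 7, c2, c3, a2, a3] →
      2 ≤ w5 g x y u v w c1 → 3 ≤ w5 g x y u v w a1 → 7 ≤ w5 g x y u v w c2 →
      8 ≤ w5 g x y u v w c3 → 9 ≤ w5 g x y u v w a2 → 10 ≤ w5 g x y u v w a3 → False := by
    intro c1 a1 c2 c3 a2 a3 hi e1 e2 e3 e4 e5 e6
    refine h5 ⟨_, hi, ?_⟩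
    intro i
    fin_cases i
    · simpa [w5] using hxy
    · simpa using e1
    · simpa using e2
    · show 4 ≤ g v w
      omega
    · show 5 ≤ g u w
      omega
    · show 6 ≤ g u v
      omega
    · simpa using e3
    · simpa using e4
    · simpa using e5
    · simpa using e6
  have i1 : w5 g x y u v w 1 = g x u := rfl
  have i2 : w5 g x y u v w 2 = g x v := rfl
  have i3 : w5 g x y u v w 3 = g x w := rfl
  have i4 : w5 g x y u v w 4 = g y u := rfl
  have i5 : w5 g x y u v w 5 = g y v := rfl
  have i6 : w5 g x y u v w 6 = g y w := rfl
  have l1 := hk x u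
  have l2 := hk x v
  have l3 := hk x w
  have l4 := hk y u
  have l5 := hk y v
  have l6 := hk y w
  rcases hx with hx | hx | hx
  · rcases hy with hy | hy | hy
    · exact key 1 4 2 3 5 6 (by decide) (by omega) (by omega) (by omega) (by omega) (by omega) (by omega)
    · exact key 1 5 2 3 4 6 (by decide) (by omega) (by omega) (by omega) (by omega) (by omega) (by omega)
    · exact key 1 6 2 3 4 5 (by decide) (by omega) (by omega) (by omega) (by omega) (by omega) (by omega)
  · rcases hy with hy | hy | hy
    · exact key 2 4 1 3 5 6 (by decide) (by omega) (by omega) (by omega) (by omega) (by omega) (by omega)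
    · exact key 2 5 1 3 4 6 (by decide) (by omega) (by omega) (by omega) (by omega) (by omega) (by omega)
    · exact key 2 6 1 3 4 5 (by decide) (by omega) (by omega) (by omega) (by omega) (by omega) (by omega)
  · rcases hy with hy | hy | hy
    · exact key 3 4 1 2 5 6 (by decide) (by omega) (by omega) (by omega) (by omega) (by omega) (by omega)
    · exact key 3 5 1 2 4 6 (by decide) (by omega) (by omega) (by omega) (by omega) (by omega) (by omega)
    · exact key 3 6 1 2 4 5 (by decide) (by omega) (by omega) (by omega) (by omega) (by omega) (by omega)

lemma bound13 (g : V → V → ℕ) (hs : ∀ x y, g x y = g y x) (h0 : ∀ x, g x x = 0)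
    (hk : ∀ x y, g x y ≤ 11) (s : Finset V) (hc13 : s.card = 13) (n4 : No4 (sh g) s)
    (n5 : No5 g s) : WW g s ≤ 1404 := by
  have hs' : ∀ x y, sh g x y = sh g y x := by intro x y; unfold sh; rw [hs]
  have h0' : ∀ x, sh g x x = 0 := by intro x; unfold sh; rw [h0]
  have hk' : ∀ x y, sh g x y ≤ 7 := by intro x y; have := hk x y; unfold sh; omega
  by_cases n3 : No3 (sh g) s
  · have b1 := boundH7 (sh g) hs' h0' hk' 13 s hc13 n3 n4
    have b2 := WW_sh g h0 s
    rw [hc13] at b2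
    rw [H7_zero 13 (by norm_num)] at b1
    omega
  unfold No3 at n3
  push Not at n3
  obtain ⟨u, hu, v, hv, w, hw, huv, huw, hvw, h6, h5, h4⟩ := n3
  obtain ⟨R, hR, hRn, hc, hW⟩ := tri_split g hs h0 s u v w hu hv hw huv huw hvw
  have hR10 : R.card = 10 := by omega
  have T : ∀ x ∈ R, g x u ≤ 4 ∨ g x v ≤ 4 ∨ g x w ≤ 4 ∨ g x u + g x v + g x w ≤ 21 := by
    intro x hx
    obtain ⟨q1, q2, q3⟩ := hRn x hx
    have := tri_local2 (sh g) u v w x h6 h5 h4 (n4 u hu v hv w hw x (hR hx) huv huw q1.symm hvw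
      q2.symm q3.symm) (hk' _ _) (hk' _ _) (hk' _ _)
    rw [hs x u, hs x v, hs x w]
    unfold sh at this
    omega
  have loc : ∀ x ∈ R, g x u + g x v + g x w ≤ 26 := by
    intro x hx
    have := T x hx
    have := hk x u
    have := hk x v
    have := hk x w
    omega
  have := hk u v
  have := hk u w
  have := hk v w
  by_cases hp : ∀ x ∈ R, ∀ y ∈ R, x ≠ y → g x y ≤ 0
  · have b1 := WW_le g h0 R 0 hp
    have b2 := sum_le' R _ 26 loc
    rw [hR10] at b1 b2
    omega
  · push Not at hp
    obtain ⟨x, hx, y, hy, hxy, hpos⟩ := hp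
    have b2 := sum_def R _ 26 loc x y hx hy hxy
    have b3 : g x u + g x v + g x w + (g y u + g y v + g y w) ≤ 50 := by
      have tx := T x hx
      have ty := T y hy
      have lx := loc x hx
      have ly := loc y hy
      by_cases ex : g x u ≤ 4 ∨ g x v ≤ 4 ∨ g x w ≤ 4
      · by_cases ey : g y u ≤ 4 ∨ g y v ≤ 4 ∨ g y w ≤ 4
        · obtain ⟨q1, q2, q3⟩ := hRn x hx
          obtain ⟨r1, r2, r3⟩ := hRn y hy
          unfold sh at h6 h5 h4
          exact five_local g x y u v w hk (n5 x (hR hx) y (hR hy) u hu v hv w hw hxy q1 q2 q3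
            r1 r2 r3 huv huw hvw) (by omega) (by omega) (by omega) hpos ex ey
        · omega
      · omega
    have b4 := boundF7 (sh g) hs' h0' hk' 10 R hR10 (n4.mono hR)
    have b5 := WW_sh g h0 R
    have b6 : F7 10 = 6 := rfl
    rw [b6] at b4
    rw [hR10] at b2 b5
    omega

lemma boundE7 (g : V → V → ℕ) (hs : ∀ x y, g x y = g y x) (h0 : ∀ x, g x x = 0)
    (hk : ∀ x y, g x y ≤ 11) : ∀ (n : ℕ) (s : Finset V), s.card = n → No5 g s →
    WW g s + 9 * n ≤ 9 * (n * n) + 2 * E7 n := by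
  have hs' : ∀ x y, sh g x y = sh g y x := by intro x y; unfold sh; rw [hs]
  have h0' : ∀ x, sh g x x = 0 := by intro x; unfold sh; rw [h0]
  have hk' : ∀ x y, sh g x y ≤ 7 := by intro x y; have := hk x y; unfold sh; omega
  intro n
  induction n using Nat.strong_induction_on with
  | _ n ih =>
  intro s hn n5
  by_cases n4 : No4 (sh g) s
  · by_cases h13 : n = 13
    · subst h13
      have := bound13 g hs h0 hk s hn n4 n5
      omega
    have b1 := boundF7 (sh g) hs' h0' hk' n s hn n4
    have b2 := F7_E7 n h13
    have b3 := WW_sh g h0 s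
    rw [hn] at b3
    omega
  obtain ⟨R, hR, hc, hW⟩ := quad_step g hs h0 11 (by norm_num) hk s n4 n5
  generalize hm : R.card = m at *
  obtain rfl : n = m + 4 := by omega
  have b4 := ih m (by omega) R hm (n5.mono hR)
  have b5 := E7_step m
  nlinarith

lemma boundE6 (g : V → V → ℕ) (hs : ∀ x y, g x y = g y x) (h0 : ∀ x, g x x = 0)
    (hk : ∀ x y, g x y ≤ 10) : ∀ (n : ℕ) (s : Finset V), s.card = n → No5 g s →
    WW g s + 9 * n ≤ 9 * (n * n) + 2 * E6 n := by
  have hs' : ∀ x y, sh g x y = sh g y x := by intro x y; unfold sh; rw [hs]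
  have h0' : ∀ x, sh g x x = 0 := by intro x; unfold sh; rw [h0]
  have hk' : ∀ x y, sh g x y ≤ 6 := by intro x y; have := hk x y; unfold sh; omega
  intro n
  induction n using Nat.strong_induction_on with
  | _ n ih =>
  intro s hn n5
  by_cases n4 : No4 (sh g) s
  · have b1 := boundF6 (sh g) hs' h0' hk' n s hn n4
    have b2 := F6_E6 n
    have b3 := WW_sh g h0 s
    rw [hn] at b3
    omega
  obtain ⟨R, hR, hc, hW⟩ := quad_step g hs h0 10 (by norm_num) hk s n4 n5
  generalize hm : R.card = m at *
  obtain rfl : n = m + 4 := by omega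
  have b4 := ih m (by omega) R hm (n5.mono hR)
  have b5 := E6_step m
  nlinarith

end Aux

lemma kTwo_le (r n K : ℕ) (hpos : 0 < turanE (r - 1) n)
    (h : (r.choose 2 - 1) * n.choose 2 ≤ K * turanE (r - 1) n) : kTwo r n ≤ K := by
  unfold kTwo
  apply Nat.ceil_le.mpr
  rw [div_le_iff₀ (by exact_mod_cast hpos)]
  exact_mod_cast h

lemma turanE_formula (t n : ℕ) : turanE t n =
    (n ^ 2 - (n % t) ^ 2) * (t - 1) / (2 * t) + (n % t).choose 2 := by
  unfold turanE
  convert card_edgeFinset_turanGraph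

lemma turanE3 (q j : ℕ) (hj : j < 3) :
    turanE 3 (3 * q + j) = 3 * q * q + 2 * q * j + j.choose 2 := by
  rw [turanE_formula]
  have h1 : (3 * q + j) % 3 = j := by omega
  rw [h1]
  congr 1
  have : (3 * q + j) ^ 2 - j ^ 2 = 9 * q * q + 6 * q * j := by
    apply Nat.sub_eq_of_eq_add; ring
  rw [this]
  apply Nat.div_eq_of_eq_mul_left (by norm_num)
  ring_nf

lemma turanE4 (q j : ℕ) (hj : j < 4) :
    turanE 4 (4 * q + j) = 6 * q * q + 3 * q * j + j.choose 2 := by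
  rw [turanE_formula]
  have h1 : (4 * q + j) % 4 = j := by omega
  rw [h1]
  congr 1
  have : (4 * q + j) ^ 2 - j ^ 2 = 16 * q * q + 8 * q * j := by
    apply Nat.sub_eq_of_eq_add; ring
  rw [this]
  apply Nat.div_eq_of_eq_mul_left (by norm_num)
  ring_nf

lemma two_choose (n : ℕ) : 2 * n.choose 2 + n = n * n := by
  induction n with
  | zero => rfl
  | succ m ih =>
    rw [Nat.choose_succ_succ' m 1, Nat.choose_one_right]; nlinarith

lemma k4_a (n : ℕ) (h4 : 4 ≤ n) : kTwo 4 n ≤ 8 := by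
  obtain ⟨q, j, hj, rfl⟩ : ∃ q j, j < 3 ∧ n = 3 * q + j :=
    ⟨n / 3, n % 3, by omega, by omega⟩
  have e := turanE3 q j hj
  have hq : 1 ≤ q := by omega
  apply kTwo_le
  · show 0 < turanE 3 _
    rw [e]; positivity
  · show 5 * _ ≤ 8 * turanE 3 _
    rw [e]
    have := two_choose (3 * q + j)
    interval_cases j <;> norm_num [Nat.choose] at * <;> nlinarith

lemma k4_b (n : ℕ) (h4 : 4 ≤ n) (h13 : n ≤ 13) : kTwo 4 n ≤ 7 := by
  apply kTwo_le
  · show 0 < turanE 3 _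
    rw [turanE_formula]
    interval_cases n <;> decide
  · show 5 * _ ≤ 7 * turanE 3 _
    rw [turanE_formula]
    interval_cases n <;> decide

lemma k5_a (n : ℕ) (h4 : 5 ≤ n) : kTwo 5 n ≤ 12 := by
  obtain ⟨q, j, hj, rfl⟩ : ∃ q j, j < 4 ∧ n = 4 * q + j :=
    ⟨n / 4, n % 4, by omega, by omega⟩
  have e := turanE4 q j hj
  have hq : 1 ≤ q := by omega
  apply kTwo_le
  · show 0 < turanE 4 _
    rw [e]; positivity
  · show 9 * _ ≤ 12 * turanE 4 _
    rw [e]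
    have := two_choose (4 * q + j)
    interval_cases j <;> norm_num [Nat.choose] at * <;> nlinarith

lemma k5_b (n : ℕ) (h4 : 5 ≤ n) (h13 : n ≤ 12) : kTwo 5 n ≤ 11 := by
  apply kTwo_le
  · show 0 < turanE 4 _
    rw [turanE_formula]
    interval_cases n <;> decide
  · show 9 * _ ≤ 11 * turanE 4 _
    rw [turanE_formula]
    interval_cases n <;> decide

/-- The weight as a function of two vertices, zero on the diagonal. -/
def gg {n : ℕ} (f : Sym2 (Fin n) → ℕ) (x y : Fin n) : ℕ := if x = y then 0 else f s(x, y)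

lemma gg_symm {n : ℕ} (f : Sym2 (Fin n) → ℕ) (x y : Fin n) : gg f x y = gg f y x := by
  unfold gg
  rw [Sym2.eq_swap]
  simp [eq_comm]

lemma gg_diag {n : ℕ} (f : Sym2 (Fin n) → ℕ) (x : Fin n) : gg f x x = 0 := by simp [gg]

lemma gg_ne {n : ℕ} (f : Sym2 (Fin n) → ℕ) (x y : Fin n) (h : x ≠ y) : gg f x y = f s(x, y) := by
  simp [gg, h]

lemma gg_sum {n : ℕ} (f : Sym2 (Fin n) → ℕ) :
    WW (gg f) Finset.univ = 2 * ∑ e ∈ (⊤ : SimpleGraph (Fin n)).edgeFinset, f e := by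
  have h1 : (⊤ : SimpleGraph (Fin n)).edgeFinset
      = (Finset.univ : Finset (Fin n)).sym2.filter (fun e => ¬ e.IsDiag) := by
    ext e
    induction e with
    | _ x y => simp
  rw [h1, Finset.sum_sym2_filter_not_isDiag]
  have h2 : ∀ x y : Fin n, gg f x y =
      (if x < y then f s(x, y) else 0) + (if y < x then f s(y, x) else 0) := by
    intro x y
    rcases lt_trichotomy x y with h | h | h
    · rw [gg_ne f x y h.ne]; simp [h, h.le]
    · subst h; simp [gg]
    · rw [gg_ne f x y h.ne']; simp [h, h.le, Sym2.eq_swap]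
  unfold WW
  simp_rw [h2, Finset.sum_add_distrib]
  rw [Finset.sum_comm (f := fun x y => if y < x then f s(y, x) else 0), ← two_mul]
  congr 1
  rw [← Finset.sum_product', ← Finset.sum_filter]
  apply Finset.sum_congr
  · ext p; simp
    exact fun h => h.ne
  · intros; rfl

lemma no4_of {n : ℕ} (f : Sym2 (Fin n) → ℕ)
    (hwsb : ∀ S : Finset (Fin n), S.card = 4 → ¬ HasWSB n 4 f S) : No4 (gg f) Finset.univ := by
  rintro a - b - c - d - hab hac had hbc hbd hcd ⟨σ, hσ, hw⟩
  let E : Fin 6 → Sym2 (Fin n) := ![s(a, b), s(a, c), s(a, d), s(b, c), s(b, d), s(c, d)]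
  have hE : Function.Injective E := by
    intro i j hij
    fin_cases i <;> fin_cases j <;> simp [E] at hij ⊢ <;> grind only
  refine hwsb {a, b, c, d} (by
    rw [Finset.card_insert_of_notMem (by simp [hab, hac, had]),
      Finset.card_insert_of_notMem (by simp [hbc, hbd]), Finset.card_pair hcd]) ?_
  refine ⟨fun i : Fin 6 => E (σ i), fun i j hij => hσ (hE hij), ?_, ?_⟩
  · intro i
    show ¬ (E (σ i)).IsDiag ∧ ∀ v ∈ E (σ i), v ∈ _
    generalize σ i = j
    fin_cases j <;> simp [E, *]
  · intro i
    have h1 := hw i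
    refine h1.trans (le_of_eq ?_)
    show _ = f (E (σ i))
    generalize σ i = j
    fin_cases j <;> simp [E, w4, gg, *]

lemma no5_of {n : ℕ} (f : Sym2 (Fin n) → ℕ)
    (hwsb : ∀ S : Finset (Fin n), S.card = 5 → ¬ HasWSB n 5 f S) : No5 (gg f) Finset.univ := by
  rintro x - a - b - c - d - hxa hxb hxc hxd hab hac had hbc hbd hcd ⟨σ, hσ, hw⟩
  let E : Fin 10 → Sym2 (Fin n) := ![s(x, a), s(x, b), s(x, c), s(x, d),
    s(a, b), s(a, c), s(a, d), s(b, c), s(b, d), s(c, d)]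
  have hE : Function.Injective E := by
    intro i j hij
    fin_cases i <;> fin_cases j <;> simp [E] at hij ⊢ <;> grind only
  refine hwsb {x, a, b, c, d} (by
    rw [Finset.card_insert_of_notMem (by simp [hxa, hxb, hxc, hxd]),
      Finset.card_insert_of_notMem (by simp [hab, hac, had]),
      Finset.card_insert_of_notMem (by simp [hbc, hbd]), Finset.card_pair hcd]) ?_
  refine ⟨fun i : Fin 10 => E (σ i), fun i j hij => hσ (hE hij), ?_, ?_⟩
  · intro i
    show ¬ (E (σ i)).IsDiag ∧ ∀ v ∈ E (σ i), v ∈ _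
    generalize σ i = j
    fin_cases j <;> simp [E, *]
  · intro i
    have h1 := hw i
    refine h1.trans (le_of_eq ?_)
    show _ = f (E (σ i))
    generalize σ i = j
    fin_cases j <;> simp [E, w5, gg, *]

/-- Conjecture 2.2 (i) for `r ∈ {4,5}`: if `f` is a `k₁`-weighting (`k₁ = k₂ − 1`) on `K_n`
such that no `r`-clique has weight sequence bound `(1, …, C(r,2))`, then
`Σ_e f(e) ≤ (C(r,2)−1)·C(n,2)`. -/
theorem weighted_bound_k1 (r n : ℕ) (hr : r = 4 ∨ r = 5) (hn : r ≤ n)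
    (f : Sym2 (Fin n) → ℕ)
    (hf : ∀ e : Sym2 (Fin n), ¬ e.IsDiag → f e ≤ kTwo r n - 1)
    (hwsb : ∀ S : Finset (Fin n), S.card = r → ¬ HasWSB n r f S) :
    ∑ e ∈ (⊤ : SimpleGraph (Fin n)).edgeFinset, f e ≤ (r.choose 2 - 1) * n.choose 2 := by
  have hle : ∀ x y, gg f x y ≤ kTwo r n - 1 := by
    intro x y
    by_cases h : x = y
    · simp [gg, h]
    · rw [gg_ne f x y h]; exact hf _ (by simpa using h)
  have hsum := gg_sum f
  have hch := two_choose n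
  have hcard : (Finset.univ : Finset (Fin n)).card = n := by simp
  rcases hr with rfl | rfl
  · have n4 := no4_of f hwsb
    show _ ≤ 5 * n.choose 2
    by_cases h : n ≤ 13
    · have hk := k4_b n hn h
      have b := boundF6 (gg f) (gg_symm f) (gg_diag f)
        (fun x y => (hle x y).trans (by omega)) n _ hcard n4
      rw [F6_zero n hn] at b
      omega
    · have hk := k4_a n hn
      have b := boundF7 (gg f) (gg_symm f) (gg_diag f)
        (fun x y => (hle x y).trans (by omega)) n _ hcard n4
      rw [F7_zero n (by omega)] at b
      omega
  · have n5 := no5_of f hwsb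
    show _ ≤ 9 * n.choose 2
    by_cases h : n ≤ 12
    · have hk := k5_b n hn h
      have b := boundE6 (gg f) (gg_symm f) (gg_diag f)
        (fun x y => (hle x y).trans (by omega)) n _ hcard n5
      rw [E6_zero n hn] at b
      omega
    · have hk := k5_a n hn
      have b := boundE7 (gg f) (gg_symm f) (gg_diag f)
        (fun x y => (hle x y).trans (by omega)) n _ hcard n5
      rw [E7_zero n (by omega)] at b
      omega
end
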